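/- arXiv:1011.1115 — 5 statements merged into one kernel-verified Lean document; each statement's English description precedes it below -/
import Mathlib

section
/- Let (X,f) be a topological dynamical system, μ an f-invariant ergodic Borel probability measure, Q a finite measurable partition of X, and g = g(n,Q) any function with g(n,Q) ≤ g(n+1,Q) and g(n,Q)/n → 0. Then for μ-almost every x, h_μ(f,Q) = lim_{n→∞} (1/n) log R_n(g,x,Q), where R_n(g,x,Q) is the first return time of x to the mistake partition element Q_g^{(n)}(x). -/
open Filter MeasureTheory Set Topology
open scoped ENNReal

/-- A *mistake function* `g : ℕ × (0,∞) → ℕ`: nondecreasing in `n` and sublinear in `n`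
for every scale `ε > 0`. -/
structure IsMistakeFunction (g : ℕ → ℝ → ℕ) : Prop where
  mono : ∀ ε : ℝ, 0 < ε → ∀ n : ℕ, g n ε ≤ g (n + 1) ε
  sublinear : ∀ ε : ℝ, 0 < ε → Tendsto (fun n : ℕ => (g n ε : ℝ) / n) atTop (nhds 0)

/-- The mistake dynamical ball `B_n(g; x, ε)`. -/
def mistakeBall {X : Type*} [PseudoMetricSpace X] (f : X → X) (g : ℕ → ℝ → ℕ)
    (n : ℕ) (x : X) (ε : ℝ) : Set X :=
  {y | ∃ Λ : Finset ℕ, Λ ⊆ Finset.range n ∧ n - g n ε ≤ Λ.card ∧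
    ∀ i ∈ Λ, dist (f^[i] y) (f^[i] x) < ε}

/-- First return time `R_n(g; x, ε)` to the mistake dynamical ball. -/
noncomputable def mistakeReturn {X : Type*} [PseudoMetricSpace X] (f : X → X)
    (g : ℕ → ℝ → ℕ) (n : ℕ) (x : X) (ε : ℝ) : ℕ :=
  sInf {k : ℕ | 1 ≤ k ∧ f^[k] x ∈ mistakeBall f g n x ε}

/-- Minimal return time `S_n(g; x, ε)` of the mistake dynamical ball to itself. -/
noncomputable def mistakeMinReturn {X : Type*} [PseudoMetricSpace X] (f : X → X)
    (g : ℕ → ℝ → ℕ) (n : ℕ) (x : X) (ε : ℝ) : ℕ :=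
  sInf {k : ℕ | 1 ≤ k ∧
    (f^[k] ⁻¹' (mistakeBall f g n x ε) ∩ mistakeBall f g n x ε).Nonempty}

/-- `g`-almost specification at scale `ε`. -/
def AlmostSpecAt {X : Type*} [PseudoMetricSpace X] (f : X → X) (g : ℕ → ℝ → ℕ)
    (ε : ℝ) : Prop :=
  ∃ N : ℕ, 0 < N ∧ ∀ x y : X, ∀ n m : ℕ, N ≤ n → N ≤ m →
    (mistakeBall f g m y ε ∩ f^[m] ⁻¹' mistakeBall f g n x ε).Nonempty

/-- The `g`-almost specification property. -/
def AlmostSpec {X : Type*} [PseudoMetricSpace X] (f : X → X) (g : ℕ → ℝ → ℕ) : Prop :=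
  ∃ ε : ℝ, 0 < ε ∧ AlmostSpecAt f g ε

/-- Static entropy `H_μ(Q^{(n)})` of the refined partition `Q^{(n)} = ⋁_{i<n} f⁻ⁱQ`,
where the finite partition `Q` is encoded by a map `P : X → Fin m`. -/
noncomputable def refinedEntropy {X : Type*} [MeasurableSpace X] (μ : Measure X)
    (f : X → X) {m : ℕ} (P : X → Fin m) (n : ℕ) : ℝ :=
  ∑ a : Fin n → Fin m, Real.negMulLog (μ {x | ∀ i : Fin n, P (f^[(i : ℕ)] x) = a i}).toReal

/-- The measure-theoretic entropy `h_μ(f, Q)` of `μ` relative to the finite partition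
encoded by `P : X → Fin m`, defined (via subadditivity) as `inf_n H_μ(Q^{(n)})/n`. -/
noncomputable def partitionEntropy {X : Type*} [MeasurableSpace X] (μ : Measure X)
    (f : X → X) {m : ℕ} (P : X → Fin m) : ℝ :=
  ⨅ n : ℕ, refinedEntropy μ f P (n + 1) / (n + 1)

/-- The Kolmogorov–Sinai entropy `h_μ(f)`: the supremum, over all finite measurable
partitions, of the entropy relative to the partition. -/
noncomputable def ksEntropy {X : Type*} [MeasurableSpace X] (μ : Measure X)
    (f : X → X) : ℝ≥0∞ :=
  ⨆ (m : ℕ) (P : X → Fin m) (_ : Measurable P), ENNReal.ofReal (partitionEntropy μ f P)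

/-- The mistake "partition element" `Q_g^{(n)}(x) = ⋃_{Λ ∈ I(g;n,Q)} Q^{(n)}_Λ(x)`, for a
finite partition encoded by `P : X → Fin m` and a mistake function `g : ℕ → ℕ` for the
partition. -/
def mistakeCylinder {X : Type*} (f : X → X) {m : ℕ} (P : X → Fin m) (g : ℕ → ℕ)
    (n : ℕ) (x : X) : Set X :=
  {y | ∃ Λ : Finset ℕ, Λ ⊆ Finset.range n ∧ n - g n ≤ Λ.card ∧
    ∀ j ∈ Λ, P (f^[j] y) = P (f^[j] x)}

/-- First return time `R_n(g, x, Q)` of `x` to the mistake partition element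
`Q_g^{(n)}(x)`. -/
noncomputable def cylReturn {X : Type*} (f : X → X) {m : ℕ} (P : X → Fin m) (g : ℕ → ℕ)
    (n : ℕ) (x : X) : ℕ :=
  sInf {k : ℕ | 1 ≤ k ∧ f^[k] x ∈ mistakeCylinder f P g n x}

/-- Minimal return time `S_n(g, x, Q)` of the set `Q_g^{(n)}(x)` to itself. -/
noncomputable def cylMinReturn {X : Type*} (f : X → X) {m : ℕ} (P : X → Fin m) (g : ℕ → ℕ)
    (n : ℕ) (x : X) : ℕ :=
  sInf {k : ℕ | 1 ≤ k ∧
    (f^[k] ⁻¹' (mistakeCylinder f P g n x) ∩ mistakeCylinder f P g n x).Nonempty}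

namespace OW

set_option linter.unusedSectionVars false
set_option linter.deprecated false

section birk
variable {X : Type*} [MeasurableSpace X]

/-- running maxima of Birkhoff sums -/
noncomputable def runMax (f : X → X) (φ : X → ℝ) : ℕ → X → ℝ
  | 0 => fun _ => 0
  | n + 1 => fun x => max 0 (φ x + runMax f φ n (f x))

lemma runMax_nonneg (f : X → X) (φ : X → ℝ) (n : ℕ) (x : X) : 0 ≤ runMax f φ n x := by
  cases n <;> simp [runMax]

lemma runMax_mono (f : X → X) (φ : X → ℝ) (n : ℕ) (x : X) :
    runMax f φ n x ≤ runMax f φ (n + 1) x := by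
  induction n generalizing x with
  | zero => exact runMax_nonneg f φ 1 x
  | succ n ih =>
    have := ih (f x)
    change max 0 (φ x + runMax f φ n (f x)) ≤ max 0 (φ x + runMax f φ (n+1) (f x))
    gcongr

lemma le_runMax (f : X → X) (φ : X → ℝ) (n : ℕ) (x : X) :
    ∑ i ∈ Finset.range n, φ (f^[i] x) ≤ runMax f φ n x := by
  induction n generalizing x with
  | zero => simp [runMax]
  | succ n ih =>
    rw [Finset.sum_range_succ']
    have := ih (f x)
    simp only [Function.iterate_succ, Function.comp, Function.iterate_zero, id]
    change _ ≤ max 0 (φ x + runMax f φ n (f x))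
    refine le_max_of_le_right ?_
    linarith

lemma runMax_meas {f : X → X} {φ : X → ℝ} (hf : Measurable f) (hφ : Measurable φ) (n : ℕ) :
    Measurable (runMax f φ n) := by
  induction n with
  | zero => exact measurable_const
  | succ n ih => exact measurable_const.max (hφ.add (ih.comp hf))

lemma runMax_le {f : X → X} {φ : X → ℝ} {C : ℝ} (hC : ∀ x, |φ x| ≤ C) (n : ℕ) (x : X) :
    runMax f φ n x ≤ n * C := by
  induction n generalizing x with
  | zero => simp [runMax]
  | succ n ih =>
    have h1 := ih (f x)
    have h2 := hC x
    have h3 := abs_nonneg (φ x)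
    have h4 := le_abs_self (φ x)
    change max 0 (φ x + runMax f φ n (f x)) ≤ _
    push_cast
    have : 0 ≤ (n:ℝ) * C := by have : 0 ≤ C := by linarith
                               positivity
    refine max_le ?_ ?_ <;> nlinarith

lemma integral_comp_mp {μ : Measure X} {f : X → X} (hμ : MeasurePreserving f μ μ) {φ : X → ℝ}
    (hφ : Measurable φ) : ∫ x, φ (f x) ∂μ = ∫ x, φ x ∂μ := by
  conv_rhs => rw [← hμ.map_eq]
  rw [integral_map hμ.measurable.aemeasurable hφ.aestronglyMeasurable]

lemma integrable_bdd {μ : Measure X} [IsFiniteMeasure μ] {φ : X → ℝ} (hφ : Measurable φ) {C : ℝ}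
    (hC : ∀ x, |φ x| ≤ C) : Integrable φ μ :=
  Integrable.of_bound hφ.aestronglyMeasurable C (Eventually.of_forall hC)

lemma birk0 {μ : Measure X} [IsProbabilityMeasure μ] {f : X → X} (hμ : Ergodic f μ) {φ : X → ℝ}
    (hφ : Measurable φ) {C : ℝ} (hC : ∀ x, |φ x| ≤ C) (hneg : ∫ x, φ x ∂μ < 0) :
    ∀ᵐ x ∂μ, ∃ B : ℝ, ∀ n : ℕ, ∑ i ∈ Finset.range n, φ (f^[i] x) ≤ B := by
  have hf : Measurable f := hμ.measurable
  set A : Set X := {x | ∀ B : ℕ, ∃ n : ℕ, (B : ℝ) < ∑ i ∈ Finset.range n, φ (f^[i] x)} with hA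
  have hAm : MeasurableSet A := by
    have : A = ⋂ B : ℕ, ⋃ n : ℕ, {x | (B : ℝ) < ∑ i ∈ Finset.range n, φ (f^[i] x)} := by
      ext x; simp [hA]
    rw [this]
    refine MeasurableSet.iInter fun B => MeasurableSet.iUnion fun n => ?_
    refine measurableSet_lt measurable_const ?_
    exact Finset.measurable_sum _ fun i _ => hφ.comp (hf.iterate i)
  have hsum : ∀ n x, ∑ i ∈ Finset.range (n+1), φ (f^[i] x)
      = ∑ i ∈ Finset.range n, φ (f^[i] (f x)) + φ x := by
    intro n x
    rw [Finset.sum_range_succ']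
    simp only [Function.iterate_succ, Function.comp, Function.iterate_zero, id]
  have hAinv : f ⁻¹' A = A := by
    ext x
    simp only [hA, mem_preimage, mem_setOf_eq]
    constructor
    · intro h B
      obtain ⟨k, hk⟩ := exists_nat_gt (|φ x|)
      obtain ⟨n, hn⟩ := h (B + k)
      refine ⟨n + 1, ?_⟩
      rw [hsum]
      have := neg_abs_le (φ x)
      push_cast at hn
      linarith
    · intro h B
      obtain ⟨k, hk⟩ := exists_nat_gt (|φ x|)
      obtain ⟨n, hn⟩ := h (B + k)
      have h5 := le_abs_self (φ x)
      push_cast at hn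
      cases n with
      | zero => 
        simp at hn
        have : (0:ℝ) ≤ B := by positivity
        have : (0:ℝ) ≤ k := by positivity
        linarith
      | succ n =>
        refine ⟨n, ?_⟩
        rw [hsum] at hn
        linarith
  rcases hμ.toPreErgodic.ae_mem_or_ae_notMem hAm hAinv with h | h
  · exfalso
    set M := runMax f φ
    have hMi : ∀ n, Integrable (M n) μ := fun n => by
      refine integrable_bdd (C := n * C) (runMax_meas hf hφ n) fun x => ?_
      rw [abs_of_nonneg (runMax_nonneg f φ n x)]
      exact runMax_le hC n x
    have hMfi : ∀ n, Integrable (fun x => M n (f x)) μ := fun n => by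
      refine integrable_bdd (C := n * C) ((runMax_meas hf hφ n).comp hf) fun x => ?_
      rw [abs_of_nonneg (runMax_nonneg f φ n _)]
      exact runMax_le hC n _
    have hMeq : ∀ n x, M (n+1) x - M n (f x) = max (- M n (f x)) (φ x) := by
      intro n x
      change max 0 (φ x + M n (f x)) - M n (f x) = _
      rw [← max_sub_sub_right]; ring_nf
    have hlim : Tendsto (fun n => ∫ x, (M (n+1) x - M n (f x)) ∂μ) atTop (𝓝 (∫ x, φ x ∂μ)) := by
      refine tendsto_integral_of_dominated_convergence (fun _ => C) ?_ (integrable_const _) ?_ ?_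
      · exact fun n => ((hMi (n+1)).sub (hMfi n)).aestronglyMeasurable
      · intro n
        refine Eventually.of_forall fun x => ?_
        rw [hMeq, Real.norm_eq_abs]
        have h1 := abs_le.1 (hC x)
        have h2 : 0 ≤ M n (f x) := runMax_nonneg f φ n _
        refine abs_le.2 ⟨le_max_of_le_right h1.1, max_le (by linarith) h1.2⟩
      · filter_upwards [h] with x hx
        have hfx : f x ∈ A := by rw [← hAinv] at hx; exact hx
        obtain ⟨B, hB⟩ := exists_nat_gt (|φ x|)
        obtain ⟨n0, hn0⟩ := hfx B
        refine tendsto_const_nhds.congr' ?_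
        filter_upwards [eventually_ge_atTop n0] with n hn
        rw [hMeq, eq_comm]
        apply max_eq_right
        have h1 : M n0 (f x) ≤ M n (f x) :=
          monotone_nat_of_le_succ (f := fun n => M n (f x)) (fun n => runMax_mono f φ n _) hn
        have h2 : _ ≤ M n0 (f x) := le_runMax f φ n0 (f x)
        have := neg_abs_le (φ x)
        linarith
    have : 0 ≤ ∫ x, φ x ∂μ := by
      refine ge_of_tendsto' hlim fun n => ?_
      rw [integral_sub (hMi _) (hMfi _), integral_comp_mp hμ.toMeasurePreserving (runMax_meas hf hφ n)]
      have := integral_mono (hMi n) (hMi (n+1)) (fun x => runMax_mono f φ n x)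
      linarith
    linarith
  · filter_upwards [h] with x hx
    simp only [hA, mem_setOf_eq, not_forall, not_exists, not_lt] at hx
    obtain ⟨B, hB⟩ := hx
    exact ⟨B, hB⟩

lemma birk {μ : Measure X} [IsProbabilityMeasure μ] {f : X → X} (hμ : Ergodic f μ) {φ : X → ℝ}
    (hφ : Measurable φ) {C : ℝ} (hC : ∀ x, |φ x| ≤ C) {c : ℝ} (hc : ∫ x, φ x ∂μ < c) :
    ∀ᵐ x ∂μ, ∃ B : ℝ, ∀ n : ℕ, ∑ i ∈ Finset.range n, φ (f^[i] x) ≤ n * c + B := by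
  have h := birk0 hμ (φ := fun x => φ x - c) (hφ.sub_const c) (C := C + |c|)
    (fun x => (abs_sub _ _).trans (by have := hC x; linarith)) (by
      rw [integral_sub (integrable_bdd hφ hC) (integrable_const _)]; simpa using hc)
  filter_upwards [h] with x ⟨B, hB⟩
  refine ⟨B, fun n => ?_⟩
  have := hB n
  simp only [Finset.sum_sub_distrib, Finset.sum_const, Finset.card_range, nsmul_eq_mul] at this
  linarith

end birk

end OW

namespace OW
set_option linter.unusedSectionVars false
set_option linter.deprecated false

section words
variable {X : Type*} [MeasurableSpace X] {m : ℕ}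

/-- itinerary of length `n` -/
def wd (f : X → X) (P : X → Fin m) (n : ℕ) (x : X) : Fin n → Fin m := fun i => P (f^[(i : ℕ)] x)

/-- probability of a word -/
noncomputable def pr (μ : Measure X) (f : X → X) (P : X → Fin m) (n : ℕ) (w : Fin n → Fin m) : ℝ :=
  μ.real (wd f P n ⁻¹' {w})

variable {μ : Measure X} [IsProbabilityMeasure μ] {f : X → X} {P : X → Fin m}

lemma wd_meas (hf : Measurable f) (hP : Measurable P) (n : ℕ) : Measurable (wd f P n) :=
  measurable_pi_lambda _ fun i => hP.comp (hf.iterate i)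

lemma wd_eq_iff {n : ℕ} {x y : X} :
    wd f P n x = wd f P n y ↔ ∀ i < n, P (f^[i] x) = P (f^[i] y) := by
  rw [funext_iff]
  exact ⟨fun h i hi => h ⟨i, hi⟩, fun h i => h i i.2⟩

lemma refinedEntropy_eq (n : ℕ) :
    refinedEntropy μ f P n = ∑ w, Real.negMulLog (pr μ f P n w) := by
  unfold refinedEntropy pr
  refine Finset.sum_congr rfl fun w _ => ?_
  congr 2
  congr 1
  ext x
  simp [wd, funext_iff]

lemma pr_nonneg (n : ℕ) (w) : 0 ≤ pr μ f P n w := measureReal_nonneg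
lemma pr_le_one (n : ℕ) (w) : pr μ f P n w ≤ 1 := measureReal_le_one

lemma integral_code {α : Type*} [Fintype α] [MeasurableSpace α] [MeasurableSingletonClass α]
    {c : X → α} (hc : Measurable c) (F : α → ℝ) :
    ∫ x, F (c x) ∂μ = ∑ a, μ.real (c ⁻¹' {a}) * F a := by
  have : IsProbabilityMeasure (μ.map c) := Measure.isProbabilityMeasure_map hc.aemeasurable
  rw [← integral_map hc.aemeasurable (f := F) (measurable_of_finite F).aestronglyMeasurable,
    integral_fintype (Integrable.of_finite)]
  refine Finset.sum_congr rfl fun a _ => ?_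
  rw [smul_eq_mul, measureReal_def, Measure.map_apply hc (measurableSet_singleton a)]
  rfl

lemma sum_code {α : Type*} [Fintype α] [MeasurableSpace α] [MeasurableSingletonClass α]
    {c : X → α} (hc : Measurable c) : ∑ a, μ.real (c ⁻¹' {a}) = 1 := by
  have := integral_code (μ := μ) hc (fun _ => 1)
  simpa using this.symm

lemma sum_pr (hf : Measurable f) (hP : Measurable P) (n : ℕ) : ∑ w, pr μ f P n w = 1 :=
  sum_code (wd_meas hf hP n)

lemma ae_pos (hf : Measurable f) (hP : Measurable P) :
    ∀ᵐ x ∂μ, ∀ n, 0 < pr μ f P n (wd f P n x) := by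
  rw [ae_all_iff]
  intro n
  have : ∀ w : Fin n → Fin m, ∀ᵐ x ∂μ, wd f P n x = w → 0 < pr μ f P n w := by
    intro w
    by_cases h : 0 < pr μ f P n w
    · simp [h]
    · have h0 : pr μ f P n w = 0 := le_antisymm (not_lt.1 h) (pr_nonneg n w)
      have h1 : μ (wd f P n ⁻¹' {w}) = 0 := by
        rwa [pr, measureReal_eq_zero_iff] at h0
      have h2 := measure_eq_zero_iff_ae_notMem.1 h1
      filter_upwards [h2] with x hx hw
      exact absurd hw hx
  filter_upwards [ae_all_iff.2 this] with x hx
  exact hx _ rfl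

lemma pr_comp (hμ : MeasurePreserving f μ μ) (hP : Measurable P) (n k : ℕ) (w : Fin n → Fin m) :
    μ.real ((fun x => wd f P n (f^[k] x)) ⁻¹' {w}) = pr μ f P n w := by
  have h := (hμ.iterate k).measure_preimage
    (wd_meas hμ.measurable hP n (measurableSet_singleton w)).nullMeasurableSet
  rw [pr, measureReal_def, measureReal_def, ← h]
  rfl

lemma entropy_nonneg (n : ℕ) : 0 ≤ refinedEntropy μ f P n := by
  rw [refinedEntropy_eq]
  exact Finset.sum_nonneg fun w _ => Real.negMulLog_nonneg (pr_nonneg n w) (pr_le_one n w)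

lemma bc {s : ℕ → Set X} {a : ℕ → ℝ} (ha : Summable a) (h : ∀ᶠ n in atTop, μ.real (s n) ≤ a n) :
    ∀ᵐ x ∂μ, ∀ᶠ n in atTop, x ∉ s n := by
  obtain ⟨N, hN⟩ := eventually_atTop.1 h
  have ha' := (summable_nat_add_iff N).2 ha
  have h1 : Summable fun n => μ.real (s (n + N)) :=
    Summable.of_nonneg_of_le (fun _ => measureReal_nonneg) (fun n => hN _ (by omega)) ha'
  have h2 : (∑' n, μ (s (n + N))) ≠ ∞ := by
    have := h1.tsum_ofReal_ne_top
    simpa [measureReal_def] using this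
  filter_upwards [ae_eventually_notMem h2] with x hx
  obtain ⟨M, hM⟩ := eventually_atTop.1 hx
  refine eventually_atTop.2 ⟨M + N, fun n hn => ?_⟩
  have := hM (n - N) (by omega)
  rwa [Nat.sub_add_cancel (by omega)] at this

lemma kac (hμ : MeasurePreserving f μ μ) {α : Type*} [MeasurableSpace α]
    [MeasurableSingletonClass α] {c : X → α} (hc : Measurable c) (a : α) (K : ℕ) :
    μ.real {x | c x = a ∧ ∀ k, 1 ≤ k → k ≤ K → c (f^[k] x) ≠ a} ≤ ((K : ℝ) + 1)⁻¹ := by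
  set S := {x | c x = a ∧ ∀ k, 1 ≤ k → k ≤ K → c (f^[k] x) ≠ a} with hS
  have hSm : MeasurableSet S := by
    have : S = c ⁻¹' {a} ∩ ⋂ k : ℕ, ⋂ _ : 1 ≤ k, ⋂ _ : k ≤ K, (fun x => c (f^[k] x)) ⁻¹' {a}ᶜ := by
      ext x; simp [hS]
    rw [this]
    refine (hc (measurableSet_singleton a)).inter ?_
    refine MeasurableSet.iInter fun k => MeasurableSet.iInter fun _ => MeasurableSet.iInter fun _ => ?_
    exact (hc.comp (hμ.measurable.iterate k)) (measurableSet_singleton a).compl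
  have hdis : Pairwise (Function.onFun Disjoint fun i : Fin (K+1) => f^[(i:ℕ)] ⁻¹' S) := by
    have key : ∀ i j : Fin (K+1), i < j → Disjoint (f^[(i:ℕ)] ⁻¹' S) (f^[(j:ℕ)] ⁻¹' S) := by
      intro i j hij
      rw [Set.disjoint_left]
      intro x hx hy
      have hij' : (i:ℕ) < j := hij
      have hj := j.2
      have h1 := hx.2 (j - i) (by omega) (by omega)
      rw [← Function.iterate_add_apply, Nat.sub_add_cancel hij'.le] at h1
      exact h1 hy.1
    intro i j hij
    rcases lt_or_gt_of_ne hij with h | h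
    · exact key i j h
    · exact (key j i h).symm
  have hsum : ∑ i : Fin (K+1), μ.real (f^[(i:ℕ)] ⁻¹' S) ≤ 1 := by
    rw [← measureReal_iUnion_fintype hdis (fun i => (hμ.measurable.iterate i) hSm)]
    exact measureReal_le_one
  have heq : ∀ i : Fin (K+1), μ.real (f^[(i:ℕ)] ⁻¹' S) = μ.real S := fun i => by
    rw [measureReal_def, (hμ.iterate i).measure_preimage hSm.nullMeasurableSet, measureReal_def]
  simp only [heq, Finset.sum_const, Finset.card_univ, Fintype.card_fin, nsmul_eq_mul] at hsum
  push_cast at hsum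
  rw [← one_div, le_div_iff₀ (by positivity)]
  linarith

end words
end OW

namespace OW
set_option linter.unusedSectionVars false
set_option linter.deprecated false
set_option linter.unusedVariables false

section upper
variable {X : Type*} [MeasurableSpace X] {m : ℕ}
variable {μ : Measure X} [IsProbabilityMeasure μ] {f : X → X} {P : X → Fin m}

/-- block code with offset `s` -/
def code (f : X → X) (P : X → Fin m) (L J s : ℕ) (x : X) :
    (Fin s → Fin m) × (Fin J → (Fin L → Fin m)) :=
  (wd f P s x, fun j => wd f P L (f^[s + j * L] x))

lemma code_meas (hf : Measurable f) (hP : Measurable P) (L J s : ℕ) :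
    Measurable (code f P L J s) :=
  (wd_meas hf hP s).prodMk (measurable_pi_lambda _ fun j =>
    (wd_meas hf hP L).comp (hf.iterate _))

lemma code_wd {L J s n : ℕ} (hn : n ≤ s + J * L) {x y : X}
    (h : code f P L J s x = code f P L J s y) : wd f P n x = wd f P n y := by
  rw [wd_eq_iff]
  intro i hi
  have h1 := wd_eq_iff.1 (congrArg Prod.fst h)
  have h2 := congrArg Prod.snd h
  by_cases his : i < s
  · exact h1 i his
  · obtain ⟨t, rfl⟩ := Nat.exists_eq_add_of_le (not_lt.1 his)
    have htL : t < J * L := by omega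
    have hL : 0 < L := Nat.pos_of_ne_zero (by rintro rfl; simp at htL)
    have hj : t / L < J := (Nat.div_lt_iff_lt_mul hL).2 htL
    have h3 := wd_eq_iff.1 (congrFun h2 ⟨t / L, hj⟩) (t % L) (Nat.mod_lt _ hL)
    simp only [← Function.iterate_add_apply] at h3
    have : t % L + (s + t / L * L) = s + t := by
      have := Nat.mod_add_div' t L
      omega
    rwa [this] at h3

lemma upper_meas (hμ : MeasurePreserving f μ μ) (hP : Measurable P) (L J s K : ℕ) (A : ℝ) :
    μ.real {x | Real.exp (-A) ≤ ∏ j : Fin J, pr μ f P L ((code f P L J s x).2 j) ∧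
      ∀ k, 1 ≤ k → k ≤ K → code f P L J s (f^[k] x) ≠ code f P L J s x}
      ≤ (m : ℝ) ^ s * Real.exp A * ((K : ℝ) + 1)⁻¹ := by
  classical
  set c := code f P L J s with hc
  have hcm : Measurable c := code_meas hμ.measurable hP L J s
  let Q : (Fin s → Fin m) × (Fin J → (Fin L → Fin m)) → ℝ := fun a => ∏ j, pr μ f P L (a.2 j)
  let S : Finset ((Fin s → Fin m) × (Fin J → (Fin L → Fin m))) :=
    Finset.univ.filter fun a => Real.exp (-A) ≤ Q a
  have hQ0 : ∀ a, 0 ≤ Q a := fun a => Finset.prod_nonneg fun j _ => pr_nonneg L _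
  have hQsum : ∑ a, Q a = (m : ℝ) ^ s := by
    rw [Fintype.sum_prod_type]
    have : ∑ b : Fin J → (Fin L → Fin m), ∏ j, pr μ f P L (b j) = 1 := by
      rw [← Fintype.prod_sum]
      simp [sum_pr hμ.measurable hP]
    simp only [Q, this]
    simp
  have hcard : (S.card : ℝ) ≤ (m : ℝ) ^ s * Real.exp A := by
    have h1 : (S.card : ℝ) * Real.exp (-A) ≤ ∑ a ∈ S, Q a := by
      rw [← nsmul_eq_mul]
      exact Finset.card_nsmul_le_sum _ _ _ fun a ha => (Finset.mem_filter.1 ha).2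
    have h2 : ∑ a ∈ S, Q a ≤ (m : ℝ) ^ s := by
      rw [← hQsum]
      exact Finset.sum_le_sum_of_subset_of_nonneg (Finset.subset_univ _) fun a _ _ => hQ0 a
    have h3 := h1.trans h2
    rw [Real.exp_neg, ← div_eq_mul_inv, div_le_iff₀ (Real.exp_pos A)] at h3
    exact h3
  have hsub : {x | Real.exp (-A) ≤ ∏ j : Fin J, pr μ f P L ((c x).2 j) ∧
      ∀ k, 1 ≤ k → k ≤ K → c (f^[k] x) ≠ c x} ⊆
      ⋃ a ∈ S, {x | c x = a ∧ ∀ k, 1 ≤ k → k ≤ K → c (f^[k] x) ≠ a} := by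
    rintro x ⟨h1, h2⟩
    simp only [mem_iUnion]
    exact ⟨c x, Finset.mem_filter.2 ⟨Finset.mem_univ _, h1⟩, rfl, h2⟩
  calc _ ≤ μ.real (⋃ a ∈ S, {x | c x = a ∧ ∀ k, 1 ≤ k → k ≤ K → c (f^[k] x) ≠ a}) :=
        measureReal_mono hsub (measure_ne_top _ _)
    _ ≤ ∑ a ∈ S, μ.real {x | c x = a ∧ ∀ k, 1 ≤ k → k ≤ K → c (f^[k] x) ≠ a} :=
        measureReal_biUnion_finset_le _ _
    _ ≤ ∑ a ∈ S, ((K : ℝ) + 1)⁻¹ := Finset.sum_le_sum fun a _ => kac hμ hcm a K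
    _ = S.card * ((K : ℝ) + 1)⁻¹ := by simp
    _ ≤ _ := by gcongr

lemma sum_blocks (F : ℕ → ℝ) (L J : ℕ) :
    ∑ i ∈ Finset.range (J * L), F i = ∑ s ∈ Finset.range L, ∑ j ∈ Finset.range J, F (s + j * L) := by
  induction J with
  | zero => simp
  | succ J ih =>
    rw [Nat.succ_mul, Finset.sum_range_add, ih, ← Finset.sum_add_distrib]
    refine Finset.sum_congr rfl fun s _ => ?_
    rw [Finset.sum_range_succ, add_comm (J * L) s]

lemma upper (hμ : Ergodic f μ) (hP : Measurable P) {c₂ : ℝ} (hc₂ : partitionEntropy μ f P < c₂) :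
    ∀ᵐ x ∂μ, ∀ᶠ n : ℕ in atTop, ∃ k : ℕ, 1 ≤ k ∧ (k : ℝ) ≤ Real.exp (n * c₂) ∧
      wd f P n (f^[k] x) = wd f P n x := by
  have hf := hμ.measurable
  have hmp := hμ.toMeasurePreserving
  obtain ⟨l, hl⟩ := exists_lt_of_ciInf_lt hc₂
  obtain ⟨c₁, hl1, hc12⟩ := exists_between hl
  obtain ⟨c₃, hc13, hc32⟩ := exists_between hc12
  set L := l + 1 with hL
  have hLpos : (0:ℝ) < L := by positivity
  have hc1 : 0 < c₁ := lt_of_le_of_lt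
    (div_nonneg (entropy_nonneg (μ := μ) (f := f) (P := P) (l+1)) (by positivity)) hl1
  have hLr : (L : ℝ) = l + 1 := by simp [hL]
  rw [← hLr, div_lt_iff₀ hLpos] at hl1
  let φ : X → ℝ := fun x => - Real.log (pr μ f P L (wd f P L x))
  have hφm : Measurable φ :=
    (measurable_of_finite (fun w => - Real.log (pr μ f P L w))).comp (wd_meas hf hP L)
  have hφi : ∫ x, φ x ∂μ < c₁ * L := by
    have := integral_code (μ := μ) (wd_meas hf hP L) (fun w => - Real.log (pr μ f P L w))
    change ∫ x, φ x ∂μ = _ at this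
    rw [this]
    refine lt_of_eq_of_lt ?_ hl1
    rw [refinedEntropy_eq]
    refine Finset.sum_congr rfl fun w _ => ?_
    rw [Real.negMulLog, pr]; ring
  have hφb : ∃ C, ∀ x, |φ x| ≤ C := by
    obtain ⟨C, hC⟩ := (Set.finite_range (fun w => |- Real.log (pr μ f P L w)|)).bddAbove
    exact ⟨C, fun x => hC ⟨wd f P L x, rfl⟩⟩
  obtain ⟨C, hC⟩ := hφb
  have hB := birk hμ hφm hC hφi
  let J : ℕ → ℕ := fun n => n / L + 1
  let K : ℕ → ℕ := fun n => ⌊Real.exp (n * c₂)⌋₊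
  let E : ℕ → Set X := fun n => ⋃ s ∈ Finset.range L,
    {x | Real.exp (-(n * c₃)) ≤ ∏ j : Fin (J n), pr μ f P L ((code f P L (J n) s x).2 j) ∧
      ∀ k, 1 ≤ k → k ≤ K n → code f P L (J n) s (f^[k] x) ≠ code f P L (J n) s x}
  let D : ℝ := ∑ s ∈ Finset.range L, (m : ℝ) ^ s
  have hE : ∀ n, μ.real (E n) ≤ D * Real.exp (-(c₂ - c₃)) ^ n := by
    intro n
    refine (measureReal_biUnion_finset_le _ _).trans ?_
    simp only [D]
    rw [Finset.sum_mul]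
    refine Finset.sum_le_sum fun s _ => ?_
    refine (upper_meas hmp hP L (J n) s (K n) (n * c₃)).trans ?_
    rw [mul_assoc]
    refine mul_le_mul_of_nonneg_left ?_ (by positivity)
    have h1 : Real.exp (n * c₂) ≤ (K n : ℝ) + 1 := (Nat.lt_floor_add_one _).le
    calc Real.exp (n * c₃) * ((K n : ℝ) + 1)⁻¹ ≤ Real.exp (n * c₃) * (Real.exp (n * c₂))⁻¹ := by
          gcongr
      _ = Real.exp (-(c₂ - c₃)) ^ n := by
          rw [← Real.exp_neg, ← Real.exp_add, ← Real.exp_nat_mul]; ring_nf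
  have hsum : Summable fun n : ℕ => D * Real.exp (-(c₂ - c₃)) ^ n :=
    (summable_geometric_of_lt_one (Real.exp_pos _).le
      (by rw [Real.exp_lt_one_iff]; linarith)).mul_left D
  have hbc := bc (μ := μ) hsum (Eventually.of_forall hE)
  have hpos : ∀ᵐ x ∂μ, ∀ i : ℕ, 0 < pr μ f P L (wd f P L (f^[i] x)) := by
    rw [ae_all_iff]
    intro i
    have := (hmp.iterate i).quasiMeasurePreserving.ae (ae_pos (μ := μ) hf hP)
    filter_upwards [this] with x hx using hx L
  filter_upwards [hB, hbc, hpos] with x ⟨B, hB⟩ hx hpx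
  have hlarge : ∀ᶠ n : ℕ in atTop, (L * c₁ + B / L) ≤ n * (c₃ - c₁) := by
    have : Tendsto (fun n : ℕ => (n : ℝ) * (c₃ - c₁)) atTop atTop :=
      tendsto_natCast_atTop_atTop.atTop_mul_const (by linarith)
    exact this.eventually_ge_atTop _
  filter_upwards [hx, hlarge] with n hn hnl
  by_contra hcon
  apply hn
  have hJ1 : n ≤ J n * L := by
    have := Nat.lt_div_mul_add (a := n) (b := L) (by omega)
    simp only [J, Nat.add_mul, one_mul]; omega
  have hJ2 : J n * L ≤ n + L := by
    have := Nat.div_mul_le_self n L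
    simp only [J, Nat.add_mul, one_mul]; omega
  have hS := hB (J n * L)
  rw [sum_blocks] at hS
  have hs : ∃ s ∈ Finset.range L, ∑ j ∈ Finset.range (J n), φ (f^[s + j * L] x) ≤ n * c₃ := by
    by_contra hno
    push Not at hno
    have h1 : ∑ s ∈ Finset.range L, (n * c₃) < ∑ s ∈ Finset.range L, ∑ j ∈ Finset.range (J n), φ (f^[s + j * L] x) :=
      Finset.sum_lt_sum_of_nonempty ⟨0, by simp [hL]⟩ hno
    simp only [Finset.sum_const, Finset.card_range, nsmul_eq_mul] at h1
    have h2 : ((J n * L : ℕ) : ℝ) ≤ n + L := by exact_mod_cast hJ2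
    have h3 : ((J n * L : ℕ) : ℝ) * (c₁ * L) ≤ (n + L) * (c₁ * L) := by gcongr
    have h4 : L * (L * c₁ + B / L) ≤ L * (n * (c₃ - c₁)) := by gcongr
    have h5 : L * (L * c₁ + B / L) = L * L * c₁ + B := by field_simp
    nlinarith
  obtain ⟨s, hsL, hs⟩ := hs
  simp only [E, mem_iUnion]
  refine ⟨s, hsL, ?_, ?_⟩
  · simp only [code]
    rw [← Real.le_log_iff_exp_le (Finset.prod_pos fun j _ => hpx _), Real.log_prod (fun j _ => (hpx _).ne')]
    rw [← Fin.sum_univ_eq_sum_range (fun j => φ (f^[s + j * L] x))] at hs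
    simp only [φ, Finset.sum_neg_distrib] at hs
    linarith
  · intro k hk1 hkK heq
    apply hcon
    refine ⟨k, hk1, ?_, code_wd (by omega) heq⟩
    exact (Nat.le_floor_iff (Real.exp_pos _).le).1 hkK

end upper
end OW

namespace OW
set_option linter.unusedSectionVars false
set_option linter.deprecated false
set_option linter.unusedVariables false

section lower
open scoped ProbabilityTheory
variable {X : Type*} [MeasurableSpace X] {m : ℕ}
variable {μ : Measure X} [IsProbabilityMeasure μ] {f : X → X} {P : X → Fin m}

lemma pr_add_le (hmp : MeasurePreserving f μ μ) (hP : Measurable P) (J n : ℕ) (x : X) :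
    pr μ f P (J + n) (wd f P (J + n) x) ≤ pr μ f P J (wd f P J (f^[n] x)) := by
  rw [← pr_comp hmp hP J n]
  refine measureReal_mono ?_ (measure_ne_top _ _)
  intro y hy
  have hy' := wd_eq_iff.1 (show wd f P (J+n) y = wd f P (J+n) x from hy)
  refine wd_eq_iff.2 fun i hi => ?_
  rw [← Function.iterate_add_apply, ← Function.iterate_add_apply]
  exact hy' _ (by omega)

/-- conditional probability of the first symbol given the next `k` -/
noncomputable def q (μ : Measure X) (f : X → X) (P : X → Fin m) (k : ℕ) (x : X) : ℝ :=
  pr μ f P (k + 1) (wd f P (k + 1) x) / pr μ f P k (wd f P k (f x))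

lemma q_nonneg (k : ℕ) (x : X) : 0 ≤ q μ f P k x := div_nonneg (pr_nonneg _ _) (pr_nonneg _ _)

lemma q_le_one (hmp : MeasurePreserving f μ μ) (hP : Measurable P) (k : ℕ) (x : X) :
    q μ f P k x ≤ 1 := div_le_one_of_le₀ (pr_add_le hmp hP k 1 x) (pr_nonneg _ _)

lemma pr_shift_pos (hmp : MeasurePreserving f μ μ) (hP : Measurable P) {k : ℕ} {x : X}
    (h : 0 < pr μ f P (k + 1) (wd f P (k + 1) x)) : 0 < pr μ f P k (wd f P k (f x)) :=
  h.trans_le (pr_add_le hmp hP k 1 x)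

lemma wd_succ_eq_iff {k : ℕ} {x y : X} :
    wd f P (k + 1) x = wd f P (k + 1) y ↔ wd f P k (f x) = wd f P k (f y) ∧ P x = P y := by
  rw [wd_eq_iff, wd_eq_iff]
  constructor
  · intro h
    exact ⟨fun i hi => h (i+1) (by omega), h 0 (by omega)⟩
  · rintro ⟨h1, h2⟩ i hi
    cases i with
    | zero => exact h2
    | succ i => exact h1 i (by omega)

lemma q_meas (hf : Measurable f) (hP : Measurable P) (k : ℕ) : Measurable (q μ f P k) :=
  ((measurable_of_finite (pr μ f P (k+1))).comp (wd_meas hf hP (k+1))).div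
    ((measurable_of_finite (pr μ f P k)).comp ((wd_meas hf hP k).comp hf))

lemma q_tendsto (hmp : MeasurePreserving f μ μ) (hP : Measurable P) :
    ∀ᵐ x ∂μ, ∃ l, Tendsto (fun k => q μ f P k x) atTop (𝓝 l) := by
  have hf := hmp.measurable
  have : Nonempty X := nonempty_of_isProbabilityMeasure μ
  have : Nonempty (Fin m) := ‹Nonempty X›.map P
  let Z : (k : ℕ) → X → (Fin k → Fin m) := fun k x => wd f P k (f x)
  have hZ : ∀ k, Measurable (Z k) := fun k => (wd_meas hf hP k).comp hf
  let ℱ : Filtration ℕ (‹MeasurableSpace X›) :=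
    { seq := fun k => MeasurableSpace.comap (Z k) inferInstance
      mono' := by
        intro k l hkl
        let r : (Fin l → Fin m) → (Fin k → Fin m) := fun w i => w (Fin.castLE hkl i)
        have : Z k = r ∘ Z l := rfl
        change MeasurableSpace.comap (Z k) _ ≤ _
        rw [this, ← MeasurableSpace.comap_comp]
        exact MeasurableSpace.comap_mono (measurable_of_finite r).comap_le
      le' := fun k => (hZ k).comap_le }
  have h1 : ∀ᵐ x ∂μ, ∀ a : Fin m, ∃ l, Tendsto (fun k => (μ⟦P ⁻¹' {a} | ℱ k⟧) x) atTop (𝓝 l) := by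
    rw [ae_all_iff]
    intro a
    filter_upwards [tendsto_ae_condExp (μ := μ) (ℱ := ℱ) ((P ⁻¹' {a}).indicator fun _ => (1:ℝ))] with x hx
    exact ⟨_, hx⟩
  have h2 : ∀ᵐ x ∂μ, ∀ (a : Fin m) (k : ℕ),
      (ProbabilityTheory.condDistrib P (Z k) μ (Z k x)).real {a} = (μ⟦P ⁻¹' {a} | ℱ k⟧) x := by
    rw [ae_all_iff]
    intro a
    rw [ae_all_iff]
    intro k
    exact ProbabilityTheory.condDistrib_ae_eq_condExp (hZ k) hP (measurableSet_singleton a)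
  filter_upwards [h1, h2, ae_pos (μ := μ) hf hP] with x hx1 hx2 hpos
  obtain ⟨l, hl⟩ := hx1 (P x)
  refine ⟨l, hl.congr fun k => ?_⟩
  rw [← hx2, measureReal_def]
  have hp := pr_shift_pos hmp hP (hpos (k+1))
  have hmap : μ.map (Z k) {Z k x} = μ (Z k ⁻¹' {Z k x}) :=
    Measure.map_apply (hZ k) (measurableSet_singleton _)
  have hreal : μ.real (Z k ⁻¹' {Z k x}) = pr μ f P k (wd f P k (f x)) :=
    pr_comp hmp hP k 1 _
  have hne : μ.map (Z k) {Z k x} ≠ 0 := by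
    rw [hmap]
    intro h0
    rw [← hreal, measureReal_def, h0] at hp
    simp at hp
  rw [ProbabilityTheory.condDistrib_apply_of_ne_zero hP _ hne, hmap,
    Measure.map_apply ((hZ k).prodMk hP)
      ((measurableSet_singleton _).prod (measurableSet_singleton _)),
    ENNReal.toReal_mul, ENNReal.toReal_inv, ← measureReal_def, ← measureReal_def, hreal, q,
    div_eq_inv_mul]
  congr 1
  rw [pr]
  congr 1
  ext y
  simp only [mem_preimage, mem_singleton_iff, mem_prod]
  rw [wd_succ_eq_iff]

/-- information function -/
noncomputable def phi (μ : Measure X) (f : X → X) (P : X → Fin m) (k : ℕ) (x : X) : ℝ :=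
  Real.log (pr μ f P k (wd f P k (f x))) - Real.log (pr μ f P (k + 1) (wd f P (k + 1) x))

/-- truncated information function -/
noncomputable def phiM (μ : Measure X) (f : X → X) (P : X → Fin m) (M : ℝ) (k : ℕ) (x : X) : ℝ :=
  - Real.log (max (q μ f P k x) (Real.exp (-M)))

lemma phi_eq (hmp : MeasurePreserving f μ μ) (hP : Measurable P) {k : ℕ} {x : X}
    (h : 0 < pr μ f P (k + 1) (wd f P (k + 1) x)) : phi μ f P k x = - Real.log (q μ f P k x) := by
  have h' := pr_shift_pos hmp hP h
  rw [q, Real.log_div h.ne' h'.ne', phi]; ring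

lemma q_pos (hmp : MeasurePreserving f μ μ) (hP : Measurable P) {k : ℕ} {x : X}
    (h : 0 < pr μ f P (k + 1) (wd f P (k + 1) x)) : 0 < q μ f P k x :=
  div_pos h (pr_shift_pos hmp hP h)

lemma phiM_le_phi (hmp : MeasurePreserving f μ μ) (hP : Measurable P) {k : ℕ} {x : X} (M : ℝ)
    (h : 0 < pr μ f P (k + 1) (wd f P (k + 1) x)) : phiM μ f P M k x ≤ phi μ f P k x := by
  rw [phi_eq hmp hP h, phiM]
  have := q_pos hmp hP h
  gcongr
  exact le_max_left _ _

lemma phi_le (hmp : MeasurePreserving f μ μ) (hP : Measurable P) {k : ℕ} {x : X} (M : ℝ)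
    (h : 0 < pr μ f P (k + 1) (wd f P (k + 1) x)) :
    phi μ f P k x ≤ phiM μ f P M k x + Real.exp (-M) * (q μ f P k x)⁻¹ := by
  rw [phi_eq hmp hP h, phiM]
  have hq := q_pos hmp hP h
  rcases le_total (Real.exp (-M)) (q μ f P k x) with h1 | h1
  · rw [max_eq_left h1]
    have : 0 ≤ Real.exp (-M) * (q μ f P k x)⁻¹ := by positivity
    linarith
  · rw [max_eq_right h1]
    have h2 := Real.log_le_self (x := Real.exp (-M) * (q μ f P k x)⁻¹) (by positivity)
    rw [Real.log_mul (Real.exp_pos _).ne' (inv_pos.2 hq).ne', Real.log_inv] at h2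
    linarith

lemma phiM_nonneg (hmp : MeasurePreserving f μ μ) (hP : Measurable P) (k : ℕ) (x : X) {M : ℝ}
    (hM : 0 ≤ M) : 0 ≤ phiM μ f P M k x := by
  rw [phiM, neg_nonneg]
  refine Real.log_nonpos (le_max_of_le_right (Real.exp_pos _).le) (max_le (q_le_one hmp hP k x) ?_)
  rw [Real.exp_le_one_iff]; linarith

lemma phiM_le (k : ℕ) (x : X) {M : ℝ} : phiM μ f P M k x ≤ M := by
  rw [phiM]
  have : Real.log (Real.exp (-M)) ≤ Real.log (max (q μ f P k x) (Real.exp (-M))) :=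
    Real.log_le_log (Real.exp_pos _) (le_max_right _ _)
  rw [Real.log_exp] at this
  linarith

lemma phiM_meas (hf : Measurable f) (hP : Measurable P) (M : ℝ) (k : ℕ) :
    Measurable (phiM μ f P M k) :=
  (Real.measurable_log.comp ((q_meas hf hP k).max measurable_const)).neg

lemma integrable_code {α : Type*} [Fintype α] [MeasurableSpace α] [MeasurableSingletonClass α]
    {c : X → α} (hc : Measurable c) (F : α → ℝ) : Integrable (fun x => F (c x)) μ := by
  obtain ⟨C, hC⟩ := (Set.finite_range (fun w => |F w|)).bddAbove
  exact integrable_bdd ((measurable_of_finite F).comp hc) (C := C) fun x => hC ⟨c x, rfl⟩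

lemma phi_code (k : ℕ) (x : X) : phi μ f P k x = (fun w : Fin (k+1) → Fin m =>
    Real.log (pr μ f P k (Fin.tail w)) - Real.log (pr μ f P (k + 1) w)) (wd f P (k+1) x) := rfl

lemma phi_integrable (hf : Measurable f) (hP : Measurable P) (k : ℕ) :
    Integrable (phi μ f P k) μ := by
  have := integrable_code (μ := μ) (wd_meas hf hP (k+1)) (fun w : Fin (k+1) → Fin m =>
    Real.log (pr μ f P k (Fin.tail w)) - Real.log (pr μ f P (k + 1) w))
  exact this

lemma integral_log (hf : Measurable f) (hP : Measurable P) (k : ℕ) :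
    ∫ x, Real.log (pr μ f P k (wd f P k x)) ∂μ = - refinedEntropy μ f P k := by
  rw [integral_code (μ := μ) (wd_meas hf hP k) (fun w => Real.log (pr μ f P k w)),
    refinedEntropy_eq, ← Finset.sum_neg_distrib]
  refine Finset.sum_congr rfl fun w _ => ?_
  rw [Real.negMulLog, pr]; ring

lemma integral_phi (hmp : MeasurePreserving f μ μ) (hP : Measurable P) (k : ℕ) :
    ∫ x, phi μ f P k x ∂μ = refinedEntropy μ f P (k + 1) - refinedEntropy μ f P k := by
  have hf := hmp.measurable
  have h1 : Measurable fun x => Real.log (pr μ f P k (wd f P k x)) :=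
    (measurable_of_finite (fun w => Real.log (pr μ f P k w))).comp (wd_meas hf hP k)
  unfold phi
  rw [integral_sub, integral_log hf hP,
    integral_comp_mp hmp (φ := fun x => Real.log (pr μ f P k (wd f P k x))) h1, integral_log hf hP]
  · ring
  · exact integrable_code (μ := μ) ((wd_meas hf hP k).comp hf) (fun w => Real.log (pr μ f P k w))
  · exact integrable_code (μ := μ) (wd_meas hf hP (k+1)) (fun w => Real.log (pr μ f P (k+1) w))

lemma qinv_integrable (hf : Measurable f) (hP : Measurable P) (k : ℕ) :
    Integrable (fun x => (q μ f P k x)⁻¹) μ := by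
  have := integrable_code (μ := μ) (wd_meas hf hP (k+1)) (fun w : Fin (k+1) → Fin m =>
    (pr μ f P (k + 1) w / pr μ f P k (Fin.tail w))⁻¹)
  exact this

lemma integral_qinv (hf : Measurable f) (hP : Measurable P) (k : ℕ) :
    ∫ x, (q μ f P k x)⁻¹ ∂μ ≤ m := by
  have h := integral_code (μ := μ) (wd_meas hf hP (k+1)) (fun w : Fin (k+1) → Fin m =>
    (pr μ f P (k + 1) w / pr μ f P k (Fin.tail w))⁻¹)
  change ∫ x, (q μ f P k x)⁻¹ ∂μ = _ at h
  rw [h]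
  have h1 : ∑ w : Fin (k+1) → Fin m, pr μ f P k (Fin.tail w) = m := by
    rw [← (Fin.consEquiv fun _ : Fin (k+1) => Fin m).sum_comp, Fintype.sum_prod_type]
    simp [Fin.consEquiv, sum_pr hf hP]
  rw [← h1]
  refine Finset.sum_le_sum fun w _ => ?_
  change pr μ f P (k+1) w * _ ≤ _
  rw [inv_div]
  rcases eq_or_ne (pr μ f P (k+1) w) 0 with h0 | h0
  · rw [h0]; simpa using pr_nonneg _ _
  · rw [mul_div_cancel₀ _ h0]

lemma integral_phi_le (hmp : MeasurePreserving f μ μ) (hP : Measurable P) (k : ℕ) {M : ℝ}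
    (hM : 0 ≤ M) :
    refinedEntropy μ f P (k + 1) - refinedEntropy μ f P k ≤
      ∫ x, phiM μ f P M k x ∂μ + m * Real.exp (-M) := by
  have hf := hmp.measurable
  have hi : Integrable (phiM μ f P M k) μ := integrable_bdd (phiM_meas hf hP M k) (C := M) fun x => by
    rw [abs_of_nonneg (phiM_nonneg hmp hP k x hM)]; exact phiM_le k x
  rw [← integral_phi hmp hP]
  have h1 : ∫ x, phi μ f P k x ∂μ ≤ ∫ x, (phiM μ f P M k x + Real.exp (-M) * (q μ f P k x)⁻¹) ∂μ := by
    refine integral_mono_ae (phi_integrable hf hP k) (hi.add ((qinv_integrable hf hP k).const_mul _)) ?_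
    filter_upwards [ae_pos (μ := μ) hf hP] with x hx
    exact phi_le hmp hP M (hx _)
  rw [integral_add hi ((qinv_integrable hf hP k).const_mul _), integral_const_mul] at h1
  have h2 := mul_le_mul_of_nonneg_left (integral_qinv (μ := μ) hf hP k) (Real.exp_pos (-M)).le
  linarith

lemma exists_psi (hmp : MeasurePreserving f μ μ) (hP : Measurable P) {c : ℝ}
    (hc : c < partitionEntropy μ f P) :
    ∃ M N, 0 ≤ M ∧ c < ∫ x, (⨅ k : ℕ, phiM μ f P M (N + k) x) ∂μ := by
  have hf := hmp.measurable
  set h := partitionEntropy μ f P with hh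
  have hlim0 : Tendsto (fun M : ℝ => (m : ℝ) * Real.exp (-M)) atTop (𝓝 0) := by
    simpa using (Real.tendsto_exp_neg_atTop_nhds_zero).const_mul (m : ℝ)
  obtain ⟨M, hM1, hM⟩ := ((hlim0.eventually_lt_const (u := h - c) (by linarith)).and
    (eventually_ge_atTop 0)).exists
  have hae := q_tendsto (μ := μ) hmp hP
  let Φ : X → ℝ := fun x => - Real.log (max (limUnder atTop (fun k => q μ f P k x)) (Real.exp (-M)))
  have hΦ : ∀ᵐ x ∂μ, Tendsto (fun k => phiM μ f P M k x) atTop (𝓝 (Φ x)) := by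
    filter_upwards [hae] with x hx
    have h1 := tendsto_nhds_limUnder hx
    have h2 := h1.max (tendsto_const_nhds (x := Real.exp (-M)))
    exact (h2.log (lt_max_of_lt_right (Real.exp_pos _)).ne').neg
  set I := ∫ x, Φ x ∂μ with hI
  have hb : ∀ k x, ‖phiM μ f P M k x‖ ≤ M := fun k x => by
    rw [Real.norm_eq_abs, abs_of_nonneg (phiM_nonneg hmp hP k x hM)]; exact phiM_le k x
  have hlimI : Tendsto (fun k => ∫ x, phiM μ f P M k x ∂μ) atTop (𝓝 I) :=
    tendsto_integral_of_dominated_convergence (fun _ => M)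
      (fun k => (phiM_meas hf hP M k).aestronglyMeasurable) (integrable_const _)
      (fun k => Eventually.of_forall (hb k)) hΦ
  have hle : h ≤ I + m * Real.exp (-M) := by
    have hces := hlimI.cesaro.add_const (m * Real.exp (-M))
    refine ge_of_tendsto hces ?_
    filter_upwards [eventually_ge_atTop 1] with n hn
    have hn0 : (0:ℝ) < n := by exact_mod_cast hn
    have h1 : h ≤ refinedEntropy μ f P n / n := by
      have hbd : BddBelow (range fun n : ℕ => refinedEntropy μ f P (n + 1) / ((n:ℝ) + 1)) :=
        ⟨0, by rintro _ ⟨n, rfl⟩; exact div_nonneg (entropy_nonneg _) (by positivity)⟩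
      have := ciInf_le hbd (n - 1)
      have h3 : n - 1 + 1 = n := by omega
      have h4 : ((n - 1 : ℕ) : ℝ) + 1 = n := by exact_mod_cast h3
      simp only [h3, h4] at this
      exact this
    have h0 : refinedEntropy μ f P 0 = 0 := by
      rw [refinedEntropy_eq]
      have hu : wd f P 0 ⁻¹' {default} = univ := by
        ext x
        exact iff_of_true (Subsingleton.elim _ _) trivial
      simp [pr, hu]
    have h2 : refinedEntropy μ f P n ≤ ∑ i ∈ Finset.range n, (∫ x, phiM μ f P M i x ∂μ + m * Real.exp (-M)) := by
      calc refinedEntropy μ f P n = ∑ i ∈ Finset.range n, (refinedEntropy μ f P (i+1) - refinedEntropy μ f P i) := by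
            rw [Finset.sum_range_sub, h0, sub_zero]
        _ ≤ _ := Finset.sum_le_sum fun i _ => integral_phi_le hmp hP i hM
    rw [Finset.sum_add_distrib, Finset.sum_const, Finset.card_range, nsmul_eq_mul] at h2
    refine h1.trans ?_
    rw [div_le_iff₀ hn0, add_mul, mul_comm _ (n:ℝ), ← mul_assoc, mul_inv_cancel₀ hn0.ne', one_mul]
    linarith
  have hbb : ∀ N x, BddBelow (range fun k : ℕ => phiM μ f P M (N + k) x) := fun N x =>
    ⟨0, by rintro _ ⟨k, rfl⟩; exact phiM_nonneg hmp hP _ x hM⟩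
  have hψ : Tendsto (fun N => ∫ x, (⨅ k : ℕ, phiM μ f P M (N + k) x) ∂μ) atTop (𝓝 I) := by
    refine tendsto_integral_of_dominated_convergence (fun _ => M) ?_ (integrable_const _) ?_ ?_
    · exact fun N => (Measurable.iInf fun k => phiM_meas hf hP M (N+k)).aestronglyMeasurable
    · refine fun N => Eventually.of_forall fun x => ?_
      rw [Real.norm_eq_abs, abs_of_nonneg (le_ciInf fun k => phiM_nonneg hmp hP _ x hM)]
      exact (ciInf_le (hbb N x) 0).trans (phiM_le _ x)
    · filter_upwards [hΦ] with x hx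
      rw [Metric.tendsto_atTop] at hx ⊢
      intro ε hε
      obtain ⟨N, hN⟩ := hx (ε/2) (by linarith)
      refine ⟨N, fun n hn => ?_⟩
      have h1 := (ciInf_le (hbb n x) 0)
      have h2 : Φ x - ε/2 ≤ ⨅ k : ℕ, phiM μ f P M (n + k) x := le_ciInf fun k => by
        have := hN (n+k) (by omega)
        rw [Real.dist_eq, abs_lt] at this
        linarith
      have h3 := hN (n+0) (by omega)
      rw [Real.dist_eq, abs_lt] at h3 ⊢
      constructor <;> linarith
  obtain ⟨N, hN⟩ := (hψ.eventually_const_lt (u := c) (by linarith)).exists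
  exact ⟨M, N, hM, hN⟩

lemma telescope (J n : ℕ) (x : X) :
    Real.log (pr μ f P J (wd f P J (f^[n] x))) - Real.log (pr μ f P (J + n) (wd f P (J + n) x))
      = ∑ i ∈ Finset.range n, phi μ f P (J + (n - 1 - i)) (f^[i] x) := by
  induction n generalizing x with
  | zero => simp
  | succ n ih =>
    rw [Finset.sum_range_succ']
    have h1 := ih (f x)
    have h2 : ∑ i ∈ Finset.range n, phi μ f P (J + (n + 1 - 1 - (i + 1))) (f^[i + 1] x)
        = ∑ i ∈ Finset.range n, phi μ f P (J + (n - 1 - i)) (f^[i] (f x)) := by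
      refine Finset.sum_congr rfl fun i _ => ?_
      rw [Function.iterate_succ_apply]
      congr 2
      omega
    have h3 : phi μ f P (J + (n + 1 - 1 - 0)) (f^[0] x) = phi μ f P (J + n) x := rfl
    rw [h2, ← h1, h3, phi, Function.iterate_succ_apply, ← add_assoc]
    ring

lemma cond_small (hμ : Ergodic f μ) (hP : Measurable P) {c : ℝ}
    (hc : c < partitionEntropy μ f P) :
    ∀ᵐ x ∂μ, ∀ᶠ n : ℕ in atTop, ∀ J, n ≤ J → pr μ f P (J + n) (wd f P (J + n) x) ≤
      Real.exp (-(n * c)) * pr μ f P J (wd f P J (f^[n] x)) := by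
  have hf := hμ.measurable
  have hmp := hμ.toMeasurePreserving
  obtain ⟨M, N, hM, hMN⟩ := exists_psi hmp hP hc
  obtain ⟨c', hc', hc'2⟩ := exists_between hMN
  have hbb : ∀ x, BddBelow (range fun k : ℕ => phiM μ f P M (N + k) x) := fun x =>
    ⟨0, by rintro _ ⟨k, rfl⟩; exact phiM_nonneg hmp hP _ x hM⟩
  set ψ : X → ℝ := fun x => ⨅ k : ℕ, phiM μ f P M (N + k) x with hψ
  have hψm : Measurable ψ := Measurable.iInf fun k => phiM_meas hf hP M (N+k)
  have hψb : ∀ x, |(-ψ x)| ≤ M := fun x => by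
    rw [abs_neg, abs_of_nonneg (le_ciInf fun k => phiM_nonneg hmp hP _ x hM)]
    exact (ciInf_le (hbb x) 0).trans (phiM_le _ x)
  have hB := birk hμ (φ := fun x => - ψ x) hψm.neg hψb (c := -c') (by rw [integral_neg]; linarith)
  have hpos : ∀ᵐ x ∂μ, ∀ i n : ℕ, 0 < pr μ f P n (wd f P n (f^[i] x)) := by
    rw [ae_all_iff]
    intro i
    exact (hmp.iterate i).quasiMeasurePreserving.ae (ae_pos (μ := μ) hf hP)
  filter_upwards [hB, hpos] with x ⟨B, hB⟩ hpx
  have hlarge : ∀ᶠ n : ℕ in atTop, B ≤ n * (c' - c) := by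
    have : Tendsto (fun n : ℕ => (n : ℝ) * (c' - c)) atTop atTop :=
      tendsto_natCast_atTop_atTop.atTop_mul_const (by linarith)
    exact this.eventually_ge_atTop _
  filter_upwards [hlarge, eventually_ge_atTop N] with n hn hnN J hJ
  have h1 := telescope (μ := μ) (f := f) (P := P) J n x
  have h2 : ∑ i ∈ Finset.range n, ψ (f^[i] x) ≤
      ∑ i ∈ Finset.range n, phi μ f P (J + (n - 1 - i)) (f^[i] x) := by
    refine Finset.sum_le_sum fun i _ => ?_
    refine le_trans ?_ (phiM_le_phi hmp hP M (hpx _ _))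
    have := ciInf_le (hbb (f^[i] x)) (J + (n - 1 - i) - N)
    rwa [show N + (J + (n - 1 - i) - N) = J + (n - 1 - i) by omega] at this
  have h3 := hB n
  simp only [Finset.sum_neg_distrib] at h3
  have hp1 : 0 < pr μ f P (J + n) (wd f P (J + n) x) := hpx 0 _
  have hp2 := hpx n J
  rw [← Real.log_le_log_iff hp1 (by positivity), Real.log_mul (Real.exp_pos _).ne' hp2.ne', Real.log_exp]
  linarith

lemma mistake_meas (hmp : MeasurePreserving f μ μ) (hP : Measurable P) (n J k : ℕ) (hk : 1 ≤ k)
    (hkJ : k ≤ J) (Γ : Finset ℕ) {A : ℝ} (hA : 0 ≤ A) :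
    μ.real {x | (∀ j < n, j ∉ Γ → P (f^[j] (f^[k] x)) = P (f^[j] x)) ∧
      pr μ f P (J + n) (wd f P (J + n) x) ≤ A * pr μ f P J (wd f P J (f^[n] x))} ≤
      A * (m : ℝ) ^ Γ.card := by
  classical
  set S := {x | (∀ j < n, j ∉ Γ → P (f^[j] (f^[k] x)) = P (f^[j] x)) ∧
      pr μ f P (J + n) (wd f P (J + n) x) ≤ A * pr μ f P J (wd f P J (f^[n] x))} with hS
  let c : X → (Fin J → Fin m) × (Γ → Fin m) := fun x => (wd f P J (f^[n] x), fun i => P (f^[(i:ℕ)] x))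
  have hinj : ∀ x ∈ S, ∀ y ∈ S, c x = c y → wd f P (J + n) x = wd f P (J + n) y := by
    intro x hx y hy hxy
    have h1 := wd_eq_iff.1 (congrArg Prod.fst hxy)
    have h2 : ∀ i ∈ Γ, P (f^[i] x) = P (f^[i] y) := fun i hi => congrFun (congrArg Prod.snd hxy) ⟨i, hi⟩
    rw [wd_eq_iff]
    have key : ∀ d i, i + d = J + n → i < J + n → P (f^[i] x) = P (f^[i] y) := by
      intro d
      induction d using Nat.strong_induction_on with
      | _ d ih =>
        intro i hid hi
        by_cases hin : i < n
        · by_cases hiΓ : i ∈ Γ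
          · exact h2 i hiΓ
          · have e1 := hx.1 i hin hiΓ
            have e2 := hy.1 i hin hiΓ
            rw [← Function.iterate_add_apply] at e1 e2
            rw [← e1, ← e2]
            exact ih (d - k) (by omega) (i + k) (by omega) (by omega)
        · have := h1 (i - n) (by omega)
          rwa [← Function.iterate_add_apply, ← Function.iterate_add_apply,
            Nat.sub_add_cancel (by omega)] at this
    intro i hi
    exact key (J + n - i) i (by omega) hi
  have hpiece : ∀ a, μ.real (S ∩ c ⁻¹' {a}) ≤ A * pr μ f P J a.1 := by
    intro a
    rcases (S ∩ c ⁻¹' {a}).eq_empty_or_nonempty with h | ⟨x, hxS, hxa⟩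
    · rw [h]; simpa using mul_nonneg hA (pr_nonneg _ _)
    · have hxa' : c x = a := hxa
      refine le_trans ?_ (hxS.2.trans (le_of_eq (by rw [← hxa'])))
      refine measureReal_mono ?_ (measure_ne_top _ _)
      rintro y ⟨hyS, hya⟩
      exact hinj y hyS x hxS ((show c y = a from hya).trans hxa'.symm)
  have hsub : S ⊆ ⋃ a ∈ (Finset.univ : Finset ((Fin J → Fin m) × (Γ → Fin m))), S ∩ c ⁻¹' {a} := by
    intro x hx
    simp only [mem_iUnion]
    exact ⟨c x, Finset.mem_univ _, hx, rfl⟩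
  calc μ.real S ≤ μ.real (⋃ a ∈ (Finset.univ : Finset ((Fin J → Fin m) × (Γ → Fin m))), S ∩ c ⁻¹' {a}) :=
        measureReal_mono hsub (measure_ne_top _ _)
    _ ≤ ∑ a, μ.real (S ∩ c ⁻¹' {a}) := measureReal_biUnion_finset_le _ _
    _ ≤ ∑ a : (Fin J → Fin m) × (Γ → Fin m), A * pr μ f P J a.1 := Finset.sum_le_sum fun a _ => hpiece a
    _ = A * (m : ℝ) ^ Γ.card := by
        rw [← Finset.mul_sum, Fintype.sum_prod_type_right]
        simp [sum_pr hmp.measurable hP]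

end lower
end OW

namespace OW
set_option linter.unusedSectionVars false
set_option linter.deprecated false
set_option linter.unusedVariables false

section final
variable {X : Type*} [MeasurableSpace X] {m : ℕ}
variable {μ : Measure X} [IsProbabilityMeasure μ] {f : X → X} {P : X → Fin m}

lemma count_mistakes (n G : ℕ) {r : ℝ} (hr : 1 ≤ r) :
    ∑ Γ ∈ (Finset.range n).powerset.filter (fun Γ => Γ.card ≤ G), (m : ℝ) ^ Γ.card
      ≤ r ^ G * (1 + m / r) ^ n := by
  have hr0 : 0 < r := by linarith
  calc _ ≤ ∑ Γ ∈ (Finset.range n).powerset.filter (fun Γ => Γ.card ≤ G),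
        r ^ G * ((m : ℝ) / r) ^ Γ.card := by
        refine Finset.sum_le_sum fun Γ hΓ => ?_
        have hc : Γ.card ≤ G := (Finset.mem_filter.1 hΓ).2
        have h1 : (m : ℝ) ^ Γ.card = r ^ Γ.card * ((m : ℝ) / r) ^ Γ.card := by
          rw [← mul_pow, mul_div_cancel₀ _ hr0.ne']
        rw [h1]
        gcongr
    _ ≤ ∑ Γ ∈ (Finset.range n).powerset, r ^ G * ((m : ℝ) / r) ^ Γ.card :=
        Finset.sum_le_sum_of_subset_of_nonneg (Finset.filter_subset _ _) fun _ _ _ => by positivity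
    _ = r ^ G * (1 + m / r) ^ n := by
        rw [← Finset.mul_sum]
        have := Finset.sum_pow_mul_eq_add_pow ((m : ℝ) / r) 1 (Finset.range n)
        simp only [one_pow, mul_one, Finset.card_range] at this
        rw [this, add_comm]

lemma lower (hμ : Ergodic f μ) (hP : Measurable P) {g : ℕ → ℕ}
    (hgsub : Tendsto (fun n : ℕ => (g n : ℝ) / n) atTop (nhds 0)) {c : ℝ}
    (hc : c < partitionEntropy μ f P) :
    ∀ᵐ x ∂μ, ∀ᶠ n : ℕ in atTop, ∀ k : ℕ, 1 ≤ k → (k : ℝ) ≤ Real.exp (n * c) →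
      f^[k] x ∉ mistakeCylinder f P g n x := by
  classical
  have hmp := hμ.toMeasurePreserving
  obtain ⟨c', hcc', hc'⟩ := exists_between hc
  set δ := c' - c with hδ
  have hδ0 : 0 < δ := by linarith
  set r : ℝ := max 1 (4 * m / δ) with hr
  have hr1 : 1 ≤ r := le_max_left _ _
  have hr0 : 0 < r := by linarith
  have hmr : m / r ≤ δ / 4 := by
    rw [div_le_iff₀ hr0]
    have h1 : 4 * m / δ ≤ r := le_max_right _ _
    rw [div_le_iff₀ hδ0] at h1
    linarith
  let K : ℕ → ℕ := fun n => ⌊Real.exp (n * c)⌋₊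
  let T : ℕ → ℕ → Finset ℕ → Set X := fun n k Γ =>
    {x | (∀ j < n, j ∉ Γ → P (f^[j] (f^[k] x)) = P (f^[j] x)) ∧
      pr μ f P (K n + n + n) (wd f P (K n + n + n) x) ≤
        Real.exp (-(n * c')) * pr μ f P (K n + n) (wd f P (K n + n) (f^[n] x))}
  let G : ℕ → Finset (Finset ℕ) := fun n =>
    (Finset.range n).powerset.filter (fun Γ => Γ.card ≤ g n)
  let S : ℕ → Set X := fun n => ⋃ k ∈ Finset.Icc 1 (K n), ⋃ Γ ∈ G n, T n k Γ
  have hS : ∀ n, μ.real (S n) ≤ Real.exp (n * c) * (Real.exp (-(n * c')) * (r ^ g n * (1 + m / r) ^ n)) := by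
    intro n
    have h1 : ∀ k ∈ Finset.Icc 1 (K n), μ.real (⋃ Γ ∈ G n, T n k Γ) ≤
        Real.exp (-(n * c')) * (r ^ g n * (1 + m / r) ^ n) := by
      intro k hk
      rw [Finset.mem_Icc] at hk
      refine (measureReal_biUnion_finset_le _ _).trans ?_
      refine (Finset.sum_le_sum fun Γ _ => mistake_meas hmp hP n (K n + n) k hk.1 (by omega) Γ
        (Real.exp_pos _).le).trans ?_
      rw [← Finset.mul_sum]
      exact mul_le_mul_of_nonneg_left (count_mistakes n (g n) hr1) (Real.exp_pos _).le
    refine (measureReal_biUnion_finset_le _ _).trans ((Finset.sum_le_sum h1).trans ?_)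
    rw [Finset.sum_const, Nat.card_Icc, Nat.add_sub_cancel, nsmul_eq_mul]
    refine mul_le_mul_of_nonneg_right (Nat.floor_le (Real.exp_pos _).le) (by positivity)
  have hev : ∀ᶠ n : ℕ in atTop, μ.real (S n) ≤ Real.exp (-(δ / 2)) ^ n := by
    have h0 : Tendsto (fun n : ℕ => (g n : ℝ) / n * Real.log r) atTop (𝓝 0) := by
      simpa using hgsub.mul_const (Real.log r)
    filter_upwards [h0.eventually_le_const (u := δ / 4) (by linarith), eventually_ge_atTop 1] with n hn hn1
    have hn0 : (0:ℝ) < n := by exact_mod_cast hn1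
    refine (hS n).trans ?_
    have h1 : r ^ g n ≤ Real.exp (n * (δ / 4)) := by
      rw [← Real.log_le_iff_le_exp (by positivity), Real.log_pow]
      have : (g n : ℝ) * Real.log r = n * ((g n : ℝ) / n * Real.log r) := by field_simp
      rw [this]
      gcongr
    have h2 : (1 + m / r) ^ n ≤ Real.exp (n * (δ / 4)) := by
      rw [Real.exp_nat_mul]
      gcongr
      have := Real.add_one_le_exp (δ / 4)
      linarith
    calc _ ≤ Real.exp (n * c) * (Real.exp (-(n * c')) * (Real.exp (n * (δ / 4)) * Real.exp (n * (δ / 4)))) := by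
          gcongr
      _ = _ := by
          rw [← Real.exp_add, ← Real.exp_add, ← Real.exp_add, ← Real.exp_nat_mul, hδ]
          ring_nf
  have hsum : Summable fun n : ℕ => Real.exp (-(δ / 2)) ^ n :=
    summable_geometric_of_lt_one (Real.exp_pos _).le (by rw [Real.exp_lt_one_iff]; linarith)
  filter_upwards [bc (μ := μ) hsum hev, cond_small hμ hP hc'] with x hx1 hx2
  filter_upwards [hx1, hx2] with n hn1 hn2 k hk1 hkc hmem
  apply hn1
  obtain ⟨Λ, hΛ, hcard, hΛP⟩ := hmem
  simp only [S, mem_iUnion]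
  refine ⟨k, Finset.mem_Icc.2 ⟨hk1, (Nat.le_floor_iff (Real.exp_pos _).le).2 hkc⟩,
    Finset.range n \ Λ, ?_, ?_, hn2 _ (by omega)⟩
  · refine Finset.mem_filter.2 ⟨Finset.mem_powerset.2 Finset.sdiff_subset, ?_⟩
    rw [Finset.card_sdiff_of_subset hΛ, Finset.card_range]
    omega
  · intro j hj hjΓ
    refine hΛP j ?_
    by_contra hjΛ
    exact hjΓ (Finset.mem_sdiff.2 ⟨Finset.mem_range.2 hj, hjΛ⟩)

lemma main (hμ : Ergodic f μ) (hP : Measurable P) {g : ℕ → ℕ}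
    (hgsub : Tendsto (fun n : ℕ => (g n : ℝ) / n) atTop (nhds 0)) :
    ∀ᵐ x ∂μ,
      Tendsto (fun n : ℕ => Real.log (cylReturn f P g n x) / n) atTop
        (nhds (partitionEntropy μ f P)) := by
  set h := partitionEntropy μ f P with hh
  have hlow : ∀ᵐ x ∂μ, ∀ c : ℚ, (c : ℝ) < h → ∀ᶠ n : ℕ in atTop, ∀ k : ℕ, 1 ≤ k →
      (k : ℝ) ≤ Real.exp (n * c) → f^[k] x ∉ mistakeCylinder f P g n x := by
    rw [ae_all_iff]
    intro c
    by_cases hc : (c : ℝ) < h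
    · filter_upwards [lower hμ hP hgsub hc] with x hx _ using hx
    · exact Eventually.of_forall fun x hx => absurd hx hc
  have hup : ∀ᵐ x ∂μ, ∀ c : ℚ, h < (c : ℝ) → ∀ᶠ n : ℕ in atTop, ∃ k : ℕ, 1 ≤ k ∧
      (k : ℝ) ≤ Real.exp (n * c) ∧ f^[k] x ∈ mistakeCylinder f P g n x := by
    rw [ae_all_iff]
    intro c
    by_cases hc : h < (c : ℝ)
    · filter_upwards [upper hμ hP hc] with x hx _
      filter_upwards [hx] with n ⟨k, hk1, hk2, hk3⟩
      refine ⟨k, hk1, hk2, Finset.range n, subset_rfl, by simp, fun j hj => ?_⟩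
      exact wd_eq_iff.1 hk3 j (Finset.mem_range.1 hj)
    · exact Eventually.of_forall fun x hx => absurd hx hc
  filter_upwards [hlow, hup] with x hxl hxu
  rw [tendsto_order]
  constructor
  · intro a ha
    obtain ⟨c, hac, hch⟩ := exists_rat_btwn ha
    obtain ⟨d, hd, _⟩ := exists_rat_btwn (lt_add_one h)
    filter_upwards [hxl c hch, hxu d hd, eventually_ge_atTop 1] with n hn1 ⟨k, hk1, _, hk3⟩ hn
    have hn0 : (0:ℝ) < n := by exact_mod_cast hn
    have hmem : cylReturn f P g n x ∈ {k : ℕ | 1 ≤ k ∧ f^[k] x ∈ mistakeCylinder f P g n x} :=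
      Nat.sInf_mem ⟨k, hk1, hk3⟩
    obtain ⟨hm1, hm2⟩ := hmem
    have hR : Real.exp (n * c) < cylReturn f P g n x := by
      by_contra hle
      exact hn1 _ hm1 (not_lt.1 hle) hm2
    refine hac.trans ?_
    rw [lt_div_iff₀ hn0, Real.lt_log_iff_exp_lt (by exact_mod_cast hm1), mul_comm]
    exact hR
  · intro b hb
    obtain ⟨d, hd, hdb⟩ := exists_rat_btwn hb
    filter_upwards [hxu d hd, eventually_ge_atTop 1] with n ⟨k, hk1, hk2, hk3⟩ hn
    have hn0 : (0:ℝ) < n := by exact_mod_cast hn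
    have hmem : cylReturn f P g n x ∈ {k : ℕ | 1 ≤ k ∧ f^[k] x ∈ mistakeCylinder f P g n x} :=
      Nat.sInf_mem ⟨k, hk1, hk3⟩
    have hm1 : 1 ≤ cylReturn f P g n x := hmem.1
    have hle : cylReturn f P g n x ≤ k := Nat.sInf_le ⟨hk1, hk3⟩
    refine lt_of_le_of_lt ?_ hdb
    rw [div_le_iff₀ hn0, Real.log_le_iff_le_exp (by exact_mod_cast hm1), mul_comm]
    refine le_trans ?_ hk2
    exact_mod_cast hle

end final
end OW

/-- Entropy relative to a partition equals the exponential growth rate of return times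
to mistake partition elements: for `μ`-a.e. `x`,
`h_μ(f,Q) = lim_n (1/n) log R_n(g, x, Q)`. -/
theorem partition_entropy_eq_mistake_cyl_return_rate {X : Type*} [MetricSpace X]
    [CompactSpace X] [MeasurableSpace X] [BorelSpace X] {f : X → X} (hf : Continuous f)
    {m : ℕ} {P : X → Fin m} (hP : Measurable P)
    {g : ℕ → ℕ} (hgmono : ∀ n, g n ≤ g (n + 1))
    (hgsub : Tendsto (fun n : ℕ => (g n : ℝ) / n) atTop (nhds 0))
    {μ : Measure X} [IsProbabilityMeasure μ] (hμ : Ergodic f μ) :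
    ∀ᵐ x ∂μ,
      Tendsto (fun n : ℕ => Real.log (cylReturn f P g n x) / n) atTop
        (nhds (partitionEntropy μ f P)) := by
  exact OW.main hμ hP hgsub
end

section
/- Let (X,f) be a topological dynamical system, Q a finite measurable partition of X, c ∈ (0,1), and μ an f-invariant ergodic Borel probability measure. Then h_μ(f,Q) = limsup_{n→∞} (1/n) log N_μ(n,c), where N_μ(n,c) denotes the minimum number of elements of the partition Q^{(n)} = ⋁_{i=0}^{n−1} f^{−i}Q needed to cover a set of μ-measure at least c. -/
open Filter MeasureTheory Set Topology
open scoped ENNReal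

/-- `N_μ(n,c)`: the minimum number of elements of the refined partition
`Q^{(n)} = ⋁_{i<n} f⁻ⁱQ` needed to cover a set of `μ`-measure at least `c`. -/
noncomputable def coverNumber {X : Type*} [MeasurableSpace X] (μ : Measure X)
    (f : X → X) {m : ℕ} (P : X → Fin m) (n : ℕ) (c : ℝ) : ℕ :=
  sInf {k : ℕ | ∃ S : Finset (Fin n → Fin m), S.card = k ∧
    c ≤ (μ (⋃ a ∈ S, {x | ∀ i : Fin n, P (f^[(i : ℕ)] x) = a i})).toReal}

theorem met_sum {X : Type*} [MeasurableSpace X] {f : X → X} {μ : Measure X}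
    [IsProbabilityMeasure μ] (hmp : MeasurePreserving f μ μ) (F : X → ℝ) (hFm : MemLp F 2 μ) (n : ℕ)
    (V : Lp ℝ 2 μ → Lp ℝ 2 μ) (hV : V = Lp.compMeasurePreserving f hmp) :
    ((birkhoffAverage ℝ V id n (hFm.toLp F) : Lp ℝ 2 μ) : X → ℝ) =ᵐ[μ]
      fun x => (n : ℝ)⁻¹ * ∑ i ∈ Finset.range n, F (f^[i] x) := by
  have hit : ∀ n, V^[n] (hFm.toLp F) = (hFm.comp_measurePreserving (hmp.iterate n)).toLp _ := by
    intro n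
    rw [hV, Lp.compMeasurePreserving_iterate]
    exact Lp.toLp_compMeasurePreserving hFm (hmp.iterate n)
  unfold birkhoffAverage birkhoffSum
  have h4 : ((∑ k ∈ Finset.range n, id (V^[k] (hFm.toLp F)) : Lp ℝ 2 μ) : X → ℝ) =ᵐ[μ]
      ∑ k ∈ Finset.range n, (F ∘ f^[k]) := by
    refine (Lp.coeFn_finsetSum _ _).trans ?_
    have : ∀ k ∈ Finset.range n, ((id (V^[k] (hFm.toLp F)) : Lp ℝ 2 μ) : X → ℝ) =ᵐ[μ] F ∘ f^[k] := by
      intro k _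
      rw [id, hit]
      exact MemLp.coeFn_toLp _
    exact eventuallyEq_sum this
  filter_upwards [Lp.coeFn_smul ((n : ℝ)⁻¹) (∑ k ∈ Finset.range n, id (V^[k] (hFm.toLp F))), h4] with x h0 hx
  rw [h0, Pi.smul_apply, hx]
  simp

theorem met_lim {X : Type*} [MeasurableSpace X] {f : X → X} {μ : Measure X}
    [IsProbabilityMeasure μ] (hμ : Ergodic f μ) (F : X → ℝ) (hFm : MemLp F 2 μ) :
    ∃ (V : Lp ℝ 2 μ → Lp ℝ 2 μ) (g : Lp ℝ 2 μ),
      V = Lp.compMeasurePreserving f hμ.toMeasurePreserving ∧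
      Tendsto (fun n => birkhoffAverage ℝ V id n (hFm.toLp F)) atTop (𝓝 g) ∧
      (g : X → ℝ) =ᵐ[μ] fun _ => ∫ x, F x ∂μ := by
  have hmp := hμ.toMeasurePreserving
  have h1m : MemLp (fun _ : X => (1 : ℝ)) 2 μ := memLp_const 1
  let U : Lp ℝ 2 μ →L[ℝ] Lp ℝ 2 μ := (Lp.compMeasurePreservingₗᵢ ℝ f hmp).toContinuousLinearMap
  have hU : ∀ g, U g = Lp.compMeasurePreserving f hmp g := fun g => rfl
  have hU1 : ‖U‖ ≤ 1 := LinearIsometry.norm_toContinuousLinearMap_le _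
  have hT := U.tendsto_birkhoffAverage_orthogonalProjection hU1 (hFm.toLp F)
  set K := (U.eqLocus (1 : Lp ℝ 2 μ →L[ℝ] Lp ℝ 2 μ)) with hK
  set g : Lp ℝ 2 μ := (K.orthogonalProjectionOnto (hFm.toLp F) : Lp ℝ 2 μ) with hg
  have hgK : U g = g := (K.orthogonalProjectionOnto (hFm.toLp F)).2
  have h1K : h1m.toLp _ ∈ K := by
    change U (h1m.toLp _) = h1m.toLp _
    rw [hU, Lp.toLp_compMeasurePreserving h1m hmp]
    rfl
  have hgc : (g : X → ℝ) ∘ f =ᵐ[μ] g := by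
    have := Lp.coeFn_compMeasurePreserving g hmp
    rw [← hU, hgK] at this
    exact this.symm
  obtain ⟨a, ha⟩ := hμ.ae_eq_const_of_ae_eq_comp_ae (Lp.aestronglyMeasurable g) hgc
  have hint : ∀ u : Lp ℝ 2 μ, inner ℝ (h1m.toLp _) u = ∫ x, u x ∂μ := by
    intro u
    rw [L2.inner_def]
    refine integral_congr_ae ?_
    filter_upwards [h1m.coeFn_toLp] with x hx
    simp
  have hae : a = ∫ x, F x ∂μ := by
    have h2 := K.inner_orthogonalProjectionOnto_eq_of_mem_left ⟨_, h1K⟩ (hFm.toLp F)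
    have h3 : inner ℝ (h1m.toLp _) g = inner ℝ (h1m.toLp _) (hFm.toLp F) := by
      rw [← h2]; rfl
    rw [hint, hint, integral_congr_ae ha, integral_congr_ae hFm.coeFn_toLp] at h3
    simpa using h3
  refine ⟨U, g, rfl, hT, ?_⟩
  rw [← hae]
  exact ha

theorem met_aux {X : Type*} [MeasurableSpace X] {f : X → X} {μ : Measure X}
    [IsProbabilityMeasure μ] (hμ : Ergodic f μ) (F : X → ℝ) (hF : Measurable F)
    (M : ℝ) (hM : ∀ x, ‖F x‖ ≤ M) (ε : ℝ) (hε : 0 < ε) :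
    Tendsto (fun n : ℕ => μ.real {x | ε ≤ ‖(n : ℝ)⁻¹ * ∑ i ∈ Finset.range n, F (f^[i] x)
      - ∫ x, F x ∂μ‖}) atTop (𝓝 0) := by
  have hFm : MemLp F 2 μ := MemLp.of_bound hF.aestronglyMeasurable M (ae_of_all _ hM)
  obtain ⟨V, g, hV, hT, hg⟩ := met_lim hμ F hFm
  have h0 : TendstoInMeasure μ
      (fun n x => (birkhoffAverage ℝ V id n (hFm.toLp F) : Lp ℝ 2 μ) x) atTop (fun x => g x) :=
    tendstoInMeasure_of_tendsto_Lp hT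
  rw [tendstoInMeasure_iff_measureReal_norm] at h0
  have hm := h0 ε hε
  have key : ∀ n : ℕ, {x | ε ≤ ‖(birkhoffAverage ℝ V id n (hFm.toLp F) : Lp ℝ 2 μ) x - g x‖} =ᵐ[μ]
      {x | ε ≤ ‖(n : ℝ)⁻¹ * ∑ i ∈ Finset.range n, F (f^[i] x) - ∫ x, F x ∂μ‖} := by
    intro n
    filter_upwards [met_sum hμ.toMeasurePreserving F hFm n V hV, hg] with x h1 h2
    apply propext
    change ε ≤ _ ↔ ε ≤ _
    rw [h1, h2]
  have key2 := fun n => measureReal_congr (key n)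
  simpa only [key2] using hm

theorem count_one {m k n : ℕ} (hk : 0 < k) (q : (Fin k → Fin m) → ℝ) (hq0 : ∀ a, 0 < q a)
    (hq1 : ∑ a, q a ≤ 1) (L : ℝ) (j : ℕ) (hj : j < k) (Y : Finset (Fin n → Fin m))
    (y : (Fin n → Fin m) → ℕ → Fin m) (hy : ∀ w ∈ Y, ∀ i : Fin n, y w i = w i)
    (hL : ∀ w ∈ Y, ∑ s ∈ Finset.range (n / k), -Real.log (q fun r => y w (j + k * s + r)) ≤ L) :
    (Y.card : ℝ) ≤ ((m : ℝ) ^ k) ^ 2 * Real.exp L := by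
  classical
  let Φ : (Fin n → Fin m) →
      (Fin (n / k) → Fin k → Fin m) × ((Fin k → Fin m) × (Fin k → Fin m)) := fun w =>
    (fun s r => y w (j + k * s + r), (fun r => y w r, fun r => y w (k * (n / k) + r)))
  have hΦ : Set.InjOn Φ Y := by
    intro w hw v hv h
    have h1 := congrArg Prod.fst h
    have h2 := congrArg (fun t => t.2.1) h
    have h3 := congrArg (fun t => t.2.2) h
    funext i
    rw [← hy w hw, ← hy v hv]
    by_cases c1 : (i : ℕ) < k
    · exact congrFun h2 ⟨i, c1⟩
    by_cases c2 : (i : ℕ) < k * (n / k)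
    · have hlt : ((i : ℕ) - j) / k < n / k := by
        rw [Nat.div_lt_iff_lt_mul hk, mul_comm]; omega
      have := congrFun (congrFun h1 ⟨((i : ℕ) - j) / k, hlt⟩) ⟨((i : ℕ) - j) % k, Nat.mod_lt _ hk⟩
      have e : j + k * (((i : ℕ) - j) / k) + ((i : ℕ) - j) % k = i := by
        have := Nat.div_add_mod ((i : ℕ) - j) k
        omega
      simpa only [Φ, e] using this
    · have hn := Nat.div_add_mod n k
      have hn2 := Nat.mod_lt n hk
      have := congrFun h3 ⟨(i : ℕ) - k * (n / k), by omega⟩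
      have e : k * (n / k) + ((i : ℕ) - k * (n / k)) = i := by omega
      simpa only [Φ, e] using this
  have hqs : ∑ g : Fin (n / k) → Fin k → Fin m, ∏ s, q (g s) ≤ 1 := by
    have h0 := Finset.prod_univ_sum (fun _ : Fin (n / k) => (Finset.univ : Finset (Fin k → Fin m)))
      (fun _ a => q a)
    rw [Fintype.piFinset_univ] at h0
    rw [← h0]
    rw [Finset.prod_const]
    exact pow_le_one₀ (Finset.sum_nonneg fun a _ => (hq0 a).le) hq1
  let Ψ : (Fin (n / k) → Fin k → Fin m) × ((Fin k → Fin m) × (Fin k → Fin m)) → ℝ :=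
    fun t => ∏ s, q (t.1 s)
  have hall : ∑ t : (Fin (n / k) → Fin k → Fin m) × ((Fin k → Fin m) × (Fin k → Fin m)),
      ∏ s, q (t.1 s) ≤ ((m : ℝ) ^ k) ^ 2 := by
    rw [Fintype.sum_prod_type]
    simp only [Finset.sum_const, Finset.card_univ, Fintype.card_prod, Fintype.card_fun,
      Fintype.card_fin, nsmul_eq_mul]
    rw [← Finset.mul_sum]
    push_cast
    have : (0 : ℝ) ≤ (m : ℝ) ^ k * (m : ℝ) ^ k := by positivity
    nlinarith
  have hsum : ∑ w ∈ Y, Real.exp (-L) ≤ ((m : ℝ) ^ k) ^ 2 := by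
    calc ∑ w ∈ Y, Real.exp (-L) ≤ ∑ w ∈ Y, ∏ s, q ((Φ w).1 s) := by
          refine Finset.sum_le_sum fun w hw => ?_
          have h1 := hL w hw
          rw [← Fin.sum_univ_eq_sum_range
            (fun s => -Real.log (q fun r => y w (j + k * s + r))), Finset.sum_neg_distrib] at h1
          rw [← Real.le_log_iff_exp_le (Finset.prod_pos fun s _ => hq0 _),
            Real.log_prod (fun s _ => (hq0 _).ne')]
          change -L ≤ ∑ s : Fin (n / k), Real.log (q fun r => y w (j + k * s + r))
          linarith
      _ = ∑ t ∈ Y.image Φ, Ψ t := by rw [Finset.sum_image hΦ]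
      _ ≤ ∑ t, Ψ t := Finset.sum_le_univ_sum_of_nonneg
          fun t => Finset.prod_nonneg fun s _ => (hq0 _).le
      _ ≤ _ := hall
  rw [Finset.sum_const, nsmul_eq_mul, Real.exp_neg] at hsum
  have := Real.exp_pos L
  rwa [← div_eq_mul_inv, div_le_iff₀ this] at hsum

theorem count_all {m k n : ℕ} (hk : 0 < k) (q : (Fin k → Fin m) → ℝ) (hq0 : ∀ a, 0 < q a)
    (hq1 : ∑ a, q a ≤ 1) (L : ℝ) (Y : Finset (Fin n → Fin m))
    (y : (Fin n → Fin m) → ℕ → Fin m) (hy : ∀ w ∈ Y, ∀ i : Fin n, y w i = w i)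
    (hL : ∀ w ∈ Y, ∑ i ∈ Finset.range n, -Real.log (q fun r => y w (i + r)) ≤ L) :
    (Y.card : ℝ) ≤ k * (((m : ℝ) ^ k) ^ 2 * Real.exp (L / k)) := by
  classical
  let Z : ℕ → Finset (Fin n → Fin m) := fun j => Y.filter fun w =>
    ∑ s ∈ Finset.range (n / k), -Real.log (q fun r => y w (j + k * s + r)) ≤ L / k
  have hG : ∀ a, 0 ≤ -Real.log (q a) := fun a => by
    have : q a ≤ 1 := (Finset.single_le_sum (fun a _ => (hq0 a).le) (Finset.mem_univ a)).trans hq1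
    have := Real.log_nonpos (hq0 a).le this
    linarith
  have hZ : Y ⊆ (Finset.range k).biUnion Z := by
    intro w hw
    have h1 : ∑ j ∈ Finset.range k, ∑ s ∈ Finset.range (n / k),
        -Real.log (q fun r => y w (j + k * s + r)) ≤ L := by
      refine le_trans ?_ (hL w hw)
      rw [← Finset.sum_product']
      rw [← Finset.sum_image (s := Finset.range k ×ˢ Finset.range (n / k))
        (g := fun p : ℕ × ℕ => p.1 + k * p.2)
        (f := fun i => -Real.log (q fun r => y w (i + r)))]
      · refine Finset.sum_le_sum_of_subset_of_nonneg ?_ fun _ _ _ => hG _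
        intro i hi
        simp only [Finset.mem_image, Finset.mem_product, Finset.mem_range] at hi ⊢
        obtain ⟨⟨a, b⟩, ⟨ha, hb⟩, rfl⟩ := hi
        have h2 : k * (b + 1) ≤ k * (n / k) := Nat.mul_le_mul_left k hb
        have := Nat.mul_div_le n k
        simp only at *
        rw [mul_add] at h2
        omega
      · rintro ⟨a, b⟩ h1 ⟨c, d⟩ h2 h
        simp only [Finset.coe_product, Set.mem_prod, Finset.mem_coe, Finset.mem_range] at h1 h2 h
        have e1 := congrArg (· % k) h
        have e2 := congrArg (· / k) h
        simp only [Nat.add_mul_mod_self_left, Nat.mod_eq_of_lt h1.1, Nat.mod_eq_of_lt h2.1] at e1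
        simp only [Nat.add_mul_div_left _ _ hk, Nat.div_eq_of_lt h1.1, Nat.div_eq_of_lt h2.1] at e2
        simp only [Prod.mk.injEq]
        omega
    have hk0 : (0 : ℝ) < k := by exact_mod_cast hk
    have h2 : ∑ j ∈ Finset.range k, ∑ s ∈ Finset.range (n / k),
        -Real.log (q fun r => y w (j + k * s + r)) ≤ ∑ j ∈ Finset.range k, L / k := by
      rw [Finset.sum_const, Finset.card_range, nsmul_eq_mul, mul_div_cancel₀ _ hk0.ne']
      exact h1
    obtain ⟨j, hj, h3⟩ := Finset.exists_le_of_sum_le (Finset.nonempty_range_iff.2 hk.ne') h2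
    exact Finset.mem_biUnion.2 ⟨j, hj, Finset.mem_filter.2 ⟨hw, h3⟩⟩
  have h4 : (Y.card : ℝ) ≤ ∑ j ∈ Finset.range k, ((Z j).card : ℝ) := by
    exact_mod_cast (Finset.card_le_card hZ).trans Finset.card_biUnion_le
  refine h4.trans ?_
  refine (Finset.sum_le_sum (g := fun _ => ((m : ℝ) ^ k) ^ 2 * Real.exp (L / k)) ?_).trans ?_
  · intro j hj
    refine count_one hk q hq0 hq1 (L / k) j (Finset.mem_range.1 hj) (Z j) y ?_ ?_
    · intro w hw
      exact hy w (Finset.mem_filter.1 hw).1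
    · intro w hw
      exact (Finset.mem_filter.1 hw).2
  · simp

/-- finite-length itinerary -/
def itin {X : Type*} (f : X → X) {m : ℕ} (P : X → Fin m) (n : ℕ) (x : X) : Fin n → Fin m :=
  fun i => P (f^[(i : ℕ)] x)

theorem cyl_eq {X : Type*} (f : X → X) {m : ℕ} (P : X → Fin m) (n : ℕ) (a : Fin n → Fin m) :
    {x | ∀ i : Fin n, P (f^[(i : ℕ)] x) = a i} = itin f P n ⁻¹' {a} := by
  ext x
  simp [itin, funext_iff]

theorem cyl_union {X : Type*} (f : X → X) {m : ℕ} (P : X → Fin m) (n : ℕ)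
    (S : Finset (Fin n → Fin m)) :
    (⋃ a ∈ S, {x | ∀ i : Fin n, P (f^[(i : ℕ)] x) = a i}) = itin f P n ⁻¹' S := by
  ext x
  simp [cyl_eq]

theorem measurable_itin {X : Type*} [MeasurableSpace X] {f : X → X} (hf : Measurable f) {m : ℕ}
    {P : X → Fin m} (hP : Measurable P) (n : ℕ) : Measurable (itin f P n) :=
  measurable_pi_lambda _ fun i => hP.comp (hf.iterate i)

/-- distribution of words -/
noncomputable def wp {X : Type*} [MeasurableSpace X] (μ : Measure X) (f : X → X) {m : ℕ}
    (P : X → Fin m) (n : ℕ) (a : Fin n → Fin m) : ℝ := μ.real (itin f P n ⁻¹' {a})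

theorem refined_eq {X : Type*} [MeasurableSpace X] (μ : Measure X) (f : X → X) {m : ℕ}
    (P : X → Fin m) (n : ℕ) : refinedEntropy μ f P n = ∑ a, Real.negMulLog (wp μ f P n a) := by
  unfold refinedEntropy wp
  simp only [cyl_eq]
  rfl

theorem wp_nonneg {X : Type*} [MeasurableSpace X] (μ : Measure X) (f : X → X) {m : ℕ}
    (P : X → Fin m) (n : ℕ) (a : Fin n → Fin m) : 0 ≤ wp μ f P n a := measureReal_nonneg

theorem wp_sum {X : Type*} [MeasurableSpace X] (μ : Measure X) [IsProbabilityMeasure μ]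
    {f : X → X} (hf : Measurable f) {m : ℕ}
    {P : X → Fin m} (hP : Measurable P) (n : ℕ) (S : Finset (Fin n → Fin m)) :
    ∑ a ∈ S, wp μ f P n a = μ.real (itin f P n ⁻¹' S) := by
  unfold wp
  rw [sum_measureReal_preimage_singleton]
  intro a _
  exact measurable_itin hf hP n (measurableSet_singleton a)

theorem wp_sum_univ {X : Type*} [MeasurableSpace X] (μ : Measure X) [IsProbabilityMeasure μ]
    {f : X → X} (hf : Measurable f) {m : ℕ}
    {P : X → Fin m} (hP : Measurable P) (n : ℕ) :
    ∑ a, wp μ f P n a = 1 := by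
  rw [wp_sum μ hf hP n]
  simp

theorem gibbs {A : Type*} [Fintype A] (p q : A → ℝ) (hp : ∀ a, 0 ≤ p a) (hq : ∀ a, 0 < q a)
    (hp1 : ∑ a, p a = 1) (hq1 : ∑ a, q a ≤ 1) :
    ∑ a, Real.negMulLog (p a) ≤ ∑ a, p a * (-Real.log (q a)) := by
  have : ∀ a, Real.negMulLog (p a) - p a * (-Real.log (q a)) ≤ q a - p a := by
    intro a
    rcases (hp a).eq_or_lt with h | h
    · rw [← h]; simp [(hq a).le]
    · have h1 := Real.log_le_sub_one_of_pos (div_pos (hq a) h)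
      rw [Real.log_div (hq a).ne' h.ne'] at h1
      have h2 := mul_le_mul_of_nonneg_left h1 h.le
      have h3 : p a * (q a / p a - 1) = q a - p a := by field_simp
      rw [h3] at h2
      unfold Real.negMulLog
      linarith
  have h := Finset.sum_le_sum fun a (_ : a ∈ Finset.univ) => this a
  rw [Finset.sum_sub_distrib, Finset.sum_sub_distrib] at h
  linarith

theorem gibbs3 {A : Type*} [Fintype A] [DecidableEq A] (p : A → ℝ) (hp : ∀ a, 0 ≤ p a)
    (hp1 : ∑ a, p a = 1) (S B : Finset A) (α β γ : ℝ) (hS : (S.card : ℝ) ≤ Real.exp α)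
    (hB : (B.card : ℝ) ≤ Real.exp β) (hA : (Fintype.card A : ℝ) ≤ Real.exp γ) :
    ∑ a, Real.negMulLog (p a) ≤
      Real.log 3 + ∑ a, p a * (if a ∈ S then α else if a ∈ B then β else γ) := by
  set u : A → ℝ := fun a => if a ∈ S then α else if a ∈ B then β else γ with hu
  have hsum : ∑ a, Real.exp (-u a) ≤ 3 := by
    have h1 : ∀ a, Real.exp (-u a) ≤ (if a ∈ S then Real.exp (-α) else 0) +
        (if a ∈ B then Real.exp (-β) else 0) + Real.exp (-γ) := by
      intro a
      have := Real.exp_pos (-α)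
      have := Real.exp_pos (-β)
      have := Real.exp_pos (-γ)
      simp only [hu]
      split_ifs <;> linarith
    have hc : ∀ (c : ℕ) (t : ℝ), (c : ℝ) ≤ Real.exp t → c * Real.exp (-t) ≤ 1 := by
      intro c t h
      rw [Real.exp_neg, ← div_eq_mul_inv]
      exact (div_le_one (Real.exp_pos t)).2 h
    refine (Finset.sum_le_sum fun a _ => h1 a).trans ?_
    rw [Finset.sum_add_distrib, Finset.sum_add_distrib, Finset.sum_const, Finset.card_univ]
    simp only [Finset.sum_ite_mem, Finset.univ_inter, Finset.sum_const, nsmul_eq_mul]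
    linarith [hc _ _ hS, hc _ _ hB, hc _ _ hA]
  have h := gibbs p (fun a => Real.exp (-u a) / 3) hp (fun a => by positivity) hp1
    (by rw [← Finset.sum_div]; linarith)
  refine h.trans (le_of_eq ?_)
  have : ∀ a, p a * (-Real.log (Real.exp (-u a) / 3)) = p a * Real.log 3 + p a * u a := by
    intro a
    rw [Real.log_div (Real.exp_pos _).ne' (by norm_num), Real.log_exp]
    ring
  simp only [this]
  rw [Finset.sum_add_distrib, ← Finset.sum_mul, hp1, one_mul]

theorem pe_bdd {X : Type*} [MeasurableSpace X] (μ : Measure X) [IsProbabilityMeasure μ]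
    (f : X → X) {m : ℕ} (P : X → Fin m) (n : ℕ) :
    0 ≤ refinedEntropy μ f P (n + 1) / (n + 1) := by
  rw [refined_eq]
  refine div_nonneg (Finset.sum_nonneg fun a _ => ?_) (by positivity)
  exact Real.negMulLog_nonneg (wp_nonneg _ _ _ _ _) measureReal_le_one

theorem pe_nonneg {X : Type*} [MeasurableSpace X] (μ : Measure X) [IsProbabilityMeasure μ]
    (f : X → X) {m : ℕ} (P : X → Fin m) : 0 ≤ partitionEntropy μ f P :=
  Real.iInf_nonneg fun n => pe_bdd μ f P n

theorem pe_le {X : Type*} [MeasurableSpace X] (μ : Measure X) [IsProbabilityMeasure μ]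
    (f : X → X) {m : ℕ} (P : X → Fin m) (n : ℕ) (hn : 0 < n) :
    n * partitionEntropy μ f P ≤ refinedEntropy μ f P n := by
  obtain ⟨k, rfl⟩ : ∃ k, n = k + 1 := ⟨n - 1, by omega⟩
  have h : partitionEntropy μ f P ≤ refinedEntropy μ f P (k + 1) / (k + 1) :=
    ciInf_le ⟨0, by rintro _ ⟨n, rfl⟩; exact pe_bdd μ f P n⟩ k
  rw [le_div_iff₀ (by positivity)] at h
  push_cast
  linarith

theorem upper_aux {X : Type*} [MeasurableSpace X] {f : X → X} {m : ℕ} {P : X → Fin m}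
    (hP : Measurable P) {μ : Measure X} [IsProbabilityMeasure μ] (hμ : Ergodic f μ)
    (hm : 0 < m) (ε : ℝ) (hε : 0 < ε) :
    ∀ᶠ n : ℕ in atTop, ∃ B : Finset (Fin n → Fin m),
      (B.card : ℝ) ≤ Real.exp (n * (partitionEntropy μ f P + ε)) ∧
      1 - ε ≤ μ.real (itin f P n ⁻¹' B) := by
  classical
  have hf : Measurable f := hμ.toMeasurePreserving.measurable
  set h := partitionEntropy μ f P with hh
  obtain ⟨k0, hk0⟩ : ∃ k0 : ℕ, refinedEntropy μ f P (k0 + 1) / (k0 + 1) < h + ε / 4 :=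
    exists_lt_of_ciInf_lt (by change h < h + ε / 4; linarith)
  obtain ⟨k, hk⟩ : ∃ k, k = k0 + 1 := ⟨_, rfl⟩
  have hkpos : 0 < k := by omega
  have hkR : (1 : ℝ) ≤ k := by exact_mod_cast hkpos
  have hHk : refinedEntropy μ f P k ≤ k * (h + ε / 4) := by
    have : (k : ℝ) = k0 + 1 := by rw [hk]; push_cast; rfl
    rw [← this, ← hk, div_lt_iff₀ (by linarith)] at hk0
    linarith
  set M : ℝ := (m : ℝ) ^ k with hMdef
  have hM : 0 < M := by positivity
  set p := wp μ f P k with hp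
  have hp0 : ∀ a, 0 ≤ p a := wp_nonneg μ f P k
  have hp1 : ∑ a, p a = 1 := wp_sum_univ μ hf hP k
  set δ : ℝ := ε / (4 * M) with hδ
  have hδ0 : 0 < δ := by positivity
  have hδM : δ * M = ε / 4 := by rw [hδ]; field_simp
  set q : (Fin k → Fin m) → ℝ := fun a => (p a + δ) / (1 + δ * M) with hq
  have hden : 0 < 1 + δ * M := by positivity
  have hq0 : ∀ a, 0 < q a := fun a => div_pos (by linarith [hp0 a]) hden
  have hq1 : ∑ a, q a ≤ 1 := by
    rw [hq, ← Finset.sum_div, Finset.sum_add_distrib, hp1]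
    simp only [Finset.sum_const, Finset.card_univ, Fintype.card_fun, Fintype.card_fin, nsmul_eq_mul]
    push_cast
    rw [← hMdef, mul_comm M δ, div_self hden.ne']
  let F : X → ℝ := fun x => -Real.log (q (itin f P k x))
  have hFmeas : Measurable F :=
    (measurable_of_finite (fun a => -Real.log (q a))).comp (measurable_itin hf hP k)
  have hFint : ∫ x, F x ∂μ ≤ k * (h + ε / 4) + ε / 4 := by
    have e1 : ∫ x, F x ∂μ = ∑ a, p a * (-Real.log (q a)) := by
      have := integral_map (μ := μ) (measurable_itin hf hP k).aemeasurable
        (f := fun a => -Real.log (q a)) (measurable_of_finite _).aestronglyMeasurable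
      rw [← this]
      have : IsProbabilityMeasure (μ.map (itin f P k)) :=
        Measure.isProbabilityMeasure_map (measurable_itin hf hP k).aemeasurable
      rw [integral_fintype (Integrable.of_finite)]
      refine Finset.sum_congr rfl fun a _ => ?_
      rw [map_measureReal_apply (measurable_itin hf hP k) (measurableSet_singleton a)]
      rfl
    rw [e1]
    have e2 : ∀ a, p a * (-Real.log (q a)) ≤ Real.negMulLog (p a) + p a * (ε / 4) := by
      intro a
      rcases (hp0 a).eq_or_lt with h0 | h0
      · rw [← h0]; simp
      · rw [hq]
        simp only
        rw [Real.log_div (by linarith) hden.ne']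
        have l1 : Real.log (p a) ≤ Real.log (p a + δ) := Real.log_le_log h0 (by linarith)
        have l2 : Real.log (1 + δ * M) ≤ ε / 4 := by
          have := Real.log_le_sub_one_of_pos hden
          linarith
        have l3 : -(Real.log (p a + δ) - Real.log (1 + δ * M)) ≤ -Real.log (p a) + ε / 4 := by
          linarith
        have := mul_le_mul_of_nonneg_left l3 h0.le
        unfold Real.negMulLog
        linarith
    refine (Finset.sum_le_sum fun a _ => e2 a).trans ?_
    rw [Finset.sum_add_distrib, ← Finset.sum_mul, hp1, one_mul, ← refined_eq]
    linarith
  have hmet := met_aux hμ F hFmeas (∑ a, ‖-Real.log (q a)‖) (fun x =>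
    Finset.single_le_sum (f := fun a => ‖-Real.log (q a)‖) (fun a _ => norm_nonneg _)
      (Finset.mem_univ (itin f P k x))) (ε / 4) (by linarith)
  have hbig : Tendsto (fun n : ℕ => Real.exp (n * (ε / 4))) atTop atTop :=
    Real.tendsto_exp_atTop.comp
      (tendsto_natCast_atTop_atTop.atTop_mul_const (by linarith))
  filter_upwards [hmet.eventually (gt_mem_nhds hε), hbig.eventually_ge_atTop (k * M ^ 2),
    eventually_gt_atTop 0] with n hn1 hn2 hn3
  have hnR : (0 : ℝ) < n := by exact_mod_cast hn3
  set bad : Set X := {x | ε / 4 ≤ ‖(n : ℝ)⁻¹ * ∑ i ∈ Finset.range n, F (f^[i] x)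
      - ∫ x, F x ∂μ‖} with hbad
  let B : Finset (Fin n → Fin m) := Finset.univ.filter fun w => ∃ x, x ∉ bad ∧ itin f P n x = w
  have hex : ∀ w : Fin n → Fin m, ∃ y : ℕ → Fin m, w ∈ B →
      ∃ x, x ∉ bad ∧ itin f P n x = w ∧ y = fun i => P (f^[i] x) := by
    intro w
    by_cases hw : w ∈ B
    · obtain ⟨x, hx, hxw⟩ := (Finset.mem_filter.1 hw).2
      exact ⟨fun i => P (f^[i] x), fun _ => ⟨x, hx, hxw, rfl⟩⟩
    · exact ⟨fun _ => ⟨0, hm⟩, fun h => absurd h hw⟩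
  choose y hy using hex
  set L : ℝ := n * (k * (h + ε / 4) + ε / 4 + ε / 4) with hL
  have hcount := count_all hkpos q hq0 hq1 L B y
    (by
      intro w hw i
      obtain ⟨x, -, hxw, hyx⟩ := hy w hw
      rw [hyx, ← hxw]
      rfl)
    (by
      intro w hw
      obtain ⟨x, hx, -, hyx⟩ := hy w hw
      have e : ∀ i : ℕ, -Real.log (q fun r => y w (i + r)) = F (f^[i] x) := by
        intro i
        simp only [F, hyx]
        congr 3
        funext r
        rw [itin, add_comm, Function.iterate_add_apply]
      simp only [e]
      rw [hbad, Set.mem_setOf_eq, not_le, Real.norm_eq_abs] at hx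
      have h1 := (abs_lt.1 hx).2
      have h2 : (n : ℝ)⁻¹ * ∑ i ∈ Finset.range n, F (f^[i] x) ≤
          k * (h + ε / 4) + ε / 4 + ε / 4 := by linarith
      rw [inv_mul_le_iff₀ hnR] at h2
      exact h2)
  refine ⟨B, ?_, ?_⟩
  · refine hcount.trans ?_
    rw [← mul_assoc]
    have h1 : L / k ≤ n * (h + ε / 4 + ε / 2) := by
      rw [div_le_iff₀ (by linarith), hL, mul_assoc]
      refine mul_le_mul_of_nonneg_left ?_ hnR.le
      nlinarith
    calc (k : ℝ) * M ^ 2 * Real.exp (L / k)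
        ≤ Real.exp (n * (ε / 4)) * Real.exp (n * (h + ε / 4 + ε / 2)) := by
          gcongr
      _ = Real.exp (n * (h + ε)) := by rw [← Real.exp_add]; congr 1; ring
  · have hsub : (Set.univ : Set X) ⊆ itin f P n ⁻¹' B ∪ bad := by
      intro x _
      by_cases hx : x ∈ bad
      · exact Or.inr hx
      · exact Or.inl (by simpa [B] using ⟨x, hx, rfl⟩)
    have h1 := (measureReal_mono (μ := μ) hsub).trans (measureReal_union_le _ _)
    rw [probReal_univ] at h1
    linarith

theorem cover_spec {X : Type*} [MeasurableSpace X] (f : X → X) {m : ℕ} (P : X → Fin m)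
    (μ : Measure X) [IsProbabilityMeasure μ] (n : ℕ) (c : ℝ) (hc0 : 0 < c) (hc : c ≤ 1) :
    ∃ S : Finset (Fin n → Fin m), S.card = coverNumber μ f P n c ∧
      c ≤ μ.real (itin f P n ⁻¹' S) ∧ 0 < S.card := by
  have := Nat.sInf_mem (s := {k : ℕ | ∃ S : Finset (Fin n → Fin m), S.card = k ∧
    c ≤ (μ (⋃ a ∈ S, {x | ∀ i : Fin n, P (f^[(i : ℕ)] x) = a i})).toReal})
    ⟨_, Finset.univ, rfl, by rw [cyl_union]; simpa using hc⟩
  obtain ⟨S, h1, h2⟩ := this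
  rw [cyl_union] at h2
  refine ⟨S, h1, h2, ?_⟩
  rw [Finset.card_pos, Finset.nonempty_iff_ne_empty]
  rintro rfl
  simp at h2
  linarith

theorem lower_aux {X : Type*} [MeasurableSpace X] {f : X → X} {m : ℕ} {P : X → Fin m}
    (hP : Measurable P) {μ : Measure X} [IsProbabilityMeasure μ] (hμ : Ergodic f μ)
    (hm : 0 < m) (ε : ℝ) (hε : 0 < ε) (c : ℝ) (hc : c ∈ Set.Ioo (0 : ℝ) 1) :
    ∀ᶠ n : ℕ in atTop,
      Real.exp (n * (partitionEntropy μ f P - ε)) ≤ coverNumber μ f P n c := by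
  classical
  have hf : Measurable f := hμ.toMeasurePreserving.measurable
  have hlm : 0 ≤ Real.log m := Real.log_natCast_nonneg m
  set h := partitionEntropy μ f P with hh
  have hh0 : 0 ≤ h := pe_nonneg μ f P
  have hcε : 0 < c * ε := mul_pos hc.1 hε
  set δ : ℝ := c * ε / (2 * (1 + Real.log m)) with hδ
  have hδ0 : 0 < δ := by positivity
  have hδ1 : δ * (1 + Real.log m) = c * ε / 2 := by rw [hδ]; field_simp
  have hbig : Tendsto (fun n : ℕ => (n : ℝ) * (c * ε / 2)) atTop atTop :=
    tendsto_natCast_atTop_atTop.atTop_mul_const (by linarith)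
  filter_upwards [upper_aux hP hμ hm δ hδ0, hbig.eventually_gt_atTop (Real.log 3),
    eventually_gt_atTop 0] with n hB hn hn0
  obtain ⟨B, hB1, hB2⟩ := hB
  obtain ⟨S, hS1, hS2, hS3⟩ := cover_spec f P μ n c hc.1 hc.2.le
  by_contra hlt
  rw [not_le, ← hS1] at hlt
  have hnR : (0 : ℝ) < n := by exact_mod_cast hn0
  have hA : (Fintype.card (Fin n → Fin m) : ℝ) ≤ Real.exp (n * Real.log m) := by
    rw [Fintype.card_fun, Fintype.card_fin, Fintype.card_fin, ← Real.log_pow, Real.exp_log]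
    · push_cast; rfl
    · positivity
  have hg := gibbs3 (wp μ f P n) (wp_nonneg μ f P n) (wp_sum_univ μ hf hP n) S B _ _ _ hlt.le hB1 hA
  rw [← refined_eq] at hg
  have hle := (pe_le μ f P n hn0).trans hg
  have hpt : ∀ a, wp μ f P n a * (if a ∈ S then n * (h - ε) else if a ∈ B then n * (h + δ)
        else n * Real.log m) ≤
      n * (wp μ f P n a * (h + δ + Real.log m) - ε * (if a ∈ S then wp μ f P n a else 0)
        - Real.log m * (if a ∈ B then wp μ f P n a else 0)) := by
    intro a
    have h0 := wp_nonneg μ f P n a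
    have h1 : 0 ≤ n * wp μ f P n a := by positivity
    have h2 : 0 ≤ (n * wp μ f P n a) * δ := by positivity
    have h3 : 0 ≤ (n * wp μ f P n a) * Real.log m := by positivity
    have h4 : 0 ≤ (n * wp μ f P n a) * h := by positivity
    split_ifs <;> linarith
  have hs := Finset.sum_le_sum fun a (_ : a ∈ Finset.univ) => hpt a
  rw [← Finset.mul_sum, Finset.sum_sub_distrib, Finset.sum_sub_distrib, ← Finset.sum_mul,
    ← Finset.mul_sum, ← Finset.mul_sum, wp_sum_univ μ hf hP n] at hs
  simp only [Finset.sum_ite_mem, Finset.univ_inter] at hs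
  rw [wp_sum μ hf hP, wp_sum μ hf hP] at hs
  have k1 : ε * c ≤ ε * μ.real (itin f P n ⁻¹' S) := mul_le_mul_of_nonneg_left hS2 hε.le
  have k2 : Real.log m * (1 - δ) ≤ Real.log m * μ.real (itin f P n ⁻¹' B) :=
    mul_le_mul_of_nonneg_left hB2 hlm
  have k3 : 1 * (h + δ + Real.log m) - ε * μ.real (itin f P n ⁻¹' S)
      - Real.log m * μ.real (itin f P n ⁻¹' B) ≤ h - c * ε / 2 := by linarith
  have k4 := mul_le_mul_of_nonneg_left k3 hnR.le
  linarith

/-- **Katok-type entropy formula.** For an ergodic `μ`, a finite measurable partition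
`Q` and any `c ∈ (0,1)`: `h_μ(f,Q) = limsup_n (1/n) log N_μ(n,c)`. -/
theorem partition_entropy_eq_cover_rate {X : Type*} [MetricSpace X] [CompactSpace X]
    [MeasurableSpace X] [BorelSpace X] {f : X → X} (hf : Continuous f)
    {m : ℕ} {P : X → Fin m} (hP : Measurable P) {c : ℝ} (hc : c ∈ Set.Ioo (0 : ℝ) 1)
    {μ : Measure X} [IsProbabilityMeasure μ] (hμ : Ergodic f μ) :
    partitionEntropy μ f P =
      limsup (fun n : ℕ => Real.log (coverNumber μ f P n c) / n) atTop := by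
  have hm : 0 < m := by
    obtain ⟨x⟩ : Nonempty X := nonempty_of_isProbabilityMeasure μ
    exact (Nat.zero_le _).trans_lt (P x).2
  refine (Tendsto.limsup_eq ?_).symm
  rw [Metric.tendsto_nhds]
  intro ε hε
  have hε2 : 0 < min (ε / 2) (1 - c) := lt_min (by linarith) (by linarith [hc.2])
  filter_upwards [upper_aux hP hμ hm _ hε2, lower_aux hP hμ hm (ε / 2) (by linarith) c hc,
    eventually_gt_atTop 0] with n hU hL hn
  have hnR : (0 : ℝ) < n := by exact_mod_cast hn
  obtain ⟨B, hB1, hB2⟩ := hU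
  obtain ⟨S, hS1, -, hS3⟩ := cover_spec f P μ n c hc.1 hc.2.le
  have hN : (0 : ℝ) < coverNumber μ f P n c := by rw [← hS1]; exact_mod_cast hS3
  have hNB : coverNumber μ f P n c ≤ B.card := by
    refine Nat.sInf_le ⟨B, rfl, ?_⟩
    rw [cyl_union]
    have := min_le_right (ε / 2) (1 - c)
    change c ≤ μ.real _
    linarith
  have h1 : Real.log (coverNumber μ f P n c) ≤ n * (partitionEntropy μ f P + ε / 2) := by
    rw [Real.log_le_iff_le_exp hN]
    refine (Nat.cast_le.2 hNB).trans (hB1.trans (Real.exp_le_exp.2 ?_))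
    refine mul_le_mul_of_nonneg_left ?_ hnR.le
    linarith [min_le_left (ε / 2) (1 - c)]
  have h2 := (Real.le_log_iff_exp_le hN).2 hL
  rw [Real.dist_eq, abs_lt]
  have h3 : Real.log (coverNumber μ f P n c) / n ≤ partitionEntropy μ f P + ε / 2 := by
    rw [div_le_iff₀ hnR]; linarith
  have h4 : partitionEntropy μ f P - ε / 2 ≤ Real.log (coverNumber μ f P n c) / n := by
    rw [le_div_iff₀ hnR]; linarith
  constructor <;> linarith
end

section
/- Let (X,f) be a topological dynamical system, μ an f-invariant ergodic Borel probability measure, φ: X → ℝ a continuous potential, g a mistake function (for a finite partition Q), and Q a finite measurable partition. Then for μ-almost every x, limsup_{n→∞} (1/n) log [ Σ_{j=0}^{R_n(g;x,Q)} e^{S_nφ(f^j(x))} ] ≤ h_μ(f,Q) + c_{φ,1}, where c_{φ,1} = limsup_{n→∞} (1/n) log ∫ e^{S_nφ} dμ is the free energy and S_nφ = Σ_{i=0}^{n−1} φ∘fⁱ. -/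
open Filter MeasureTheory Set Topology
open scoped ENNReal

noncomputable def wfrMax {X : Type*} (f : X → X) (G : X → ℝ) : ℕ → X → ℝ
  | 0, _ => 0
  | n + 1, x => max 0 (G x + wfrMax f G n (f x))

theorem wfrMax_nonneg {X : Type*} (f : X → X) (G : X → ℝ) (n : ℕ) (x : X) :
    0 ≤ wfrMax f G n x := by
  cases n <;> simp [wfrMax]

theorem wfrMax_mono {X : Type*} (f : X → X) (G : X → ℝ) (n : ℕ) :
    ∀ x, wfrMax f G n x ≤ wfrMax f G (n + 1) x := by
  induction n with
  | zero => intro x; exact wfrMax_nonneg f G 1 x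
  | succ n ih =>
    intro x
    have := ih (f x)
    simp only [wfrMax] at this ⊢
    gcongr

theorem wfrMax_le {X : Type*} (f : X → X) (G : X → ℝ) {C : ℝ} (hC : 0 ≤ C) (hG : ∀ x, G x ≤ C)
    (n : ℕ) : ∀ x, wfrMax f G n x ≤ n * C := by
  induction n with
  | zero => intro x; simp [wfrMax]
  | succ n ih =>
    intro x
    have h1 := ih (f x)
    have h2 := hG x
    simp only [wfrMax]
    refine max_le (by positivity) ?_
    push_cast
    linarith

theorem wfrMax_sum_le {X : Type*} (f : X → X) (G : X → ℝ) (n : ℕ) :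
    ∀ x, ∑ i ∈ Finset.range n, G (f^[i] x) ≤ wfrMax f G n x := by
  induction n with
  | zero => intro x; simp [wfrMax]
  | succ n ih =>
    intro x
    have h1 := ih (f x)
    rw [Finset.sum_range_succ']
    simp only [wfrMax, Function.iterate_succ, Function.comp, Function.iterate_zero, id]
    refine le_max_of_le_right ?_
    linarith

theorem wfrMax_measurable {X : Type*} [MeasurableSpace X] {f : X → X} (hf : Measurable f)
    {G : X → ℝ} (hG : Measurable G) (n : ℕ) : Measurable (wfrMax f G n) := by
  induction n with
  | zero => exact measurable_const
  | succ n ih =>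
    change Measurable fun x => max 0 (G x + wfrMax f G n (f x))
    exact measurable_const.max (hG.add (ih.comp hf))

theorem wfr_bounded {X : Type*} [MeasurableSpace X] {f : X → X} {μ : Measure X}
    [IsProbabilityMeasure μ] (hμ : Ergodic f μ) {G : X → ℝ} (hG : Measurable G) {C : ℝ}
    (hC : ∀ x, |G x| ≤ C) (hint : ∫ x, G x ∂μ < 0) :
    ∀ᵐ x ∂μ, ∃ K : ℕ, ∀ n, ∑ i ∈ Finset.range n, G (f^[i] x) ≤ K := by
  have hne : Nonempty X := nonempty_of_isProbabilityMeasure μ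
  obtain ⟨x0⟩ := hne
  have hC0 : 0 ≤ C := (abs_nonneg _).trans (hC x0)
  have hfm := hμ.toMeasurePreserving.measurable
  have hM := wfrMax_measurable hfm hG
  set E : Set X := {x | ∀ K : ℕ, ∃ n, (K : ℝ) < wfrMax f G n x} with hE
  have hEm : MeasurableSet E := by
    have : E = ⋂ K : ℕ, ⋃ n : ℕ, {x | (K : ℝ) < wfrMax f G n x} := by
      ext x; simp [hE]
    rw [this]
    exact MeasurableSet.iInter fun K => MeasurableSet.iUnion fun n =>
      measurableSet_lt measurable_const (hM n)
  have hinv : f ⁻¹' E = E := by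
    ext x
    simp only [hE, mem_preimage, mem_ofPred_eq]
    have hx := abs_le.1 (hC x)
    obtain ⟨L, hL⟩ := exists_nat_ge C
    constructor
    · intro h K
      obtain ⟨n, hn⟩ := h (K + L)
      refine ⟨n + 1, lt_max_of_lt_right ?_⟩
      push_cast at hn
      linarith
    · intro h K
      obtain ⟨n, hn⟩ := h (K + L)
      push_cast at hn
      cases n with
      | zero =>
        simp only [wfrMax] at hn
        have : (0 : ℝ) ≤ K := by positivity
        have : (0 : ℝ) ≤ L := by positivity
        linarith
      | succ n =>
        refine ⟨n, ?_⟩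
        simp only [wfrMax] at hn
        rcases lt_max_iff.1 hn with h' | h'
        · have : (0 : ℝ) ≤ K := by positivity
          have : (0 : ℝ) ≤ L := by positivity
          linarith
        · linarith
  rcases hμ.toPreErgodic.ae_mem_or_ae_notMem hEm hinv with h | h
  · exfalso
    have hlim : Tendsto (fun n => ∫ x, (wfrMax f G (n + 1) x - wfrMax f G n (f x)) ∂μ) atTop
        (𝓝 (∫ x, G x ∂μ)) := by
      refine tendsto_integral_of_dominated_convergence (fun _ => C) ?_ (integrable_const _) ?_ ?_
      · intro n
        exact ((hM (n + 1)).sub ((hM n).comp hfm)).aestronglyMeasurable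
      · intro n
        refine Eventually.of_forall fun x => ?_
        have h0 := wfrMax_nonneg f G n (f x)
        have hx := abs_le.1 (hC x)
        rw [Real.norm_eq_abs, abs_le]
        simp only [wfrMax]
        constructor
        · have := le_max_right 0 (G x + wfrMax f G n (f x))
          linarith
        · have : max 0 (G x + wfrMax f G n (f x)) ≤ C + wfrMax f G n (f x) :=
            max_le (by linarith) (by linarith)
          linarith
      · filter_upwards [h] with x hx
        have hx' : f x ∈ E := by
          have : x ∈ f ⁻¹' E := by rw [hinv]; exact hx
          exact this
        obtain ⟨L, hL⟩ := exists_nat_ge C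
        obtain ⟨n0, hn0⟩ := hx' L
        have hmono : Monotone fun n => wfrMax f G n (f x) :=
          monotone_nat_of_le_succ fun n => wfrMax_mono f G n (f x)
        refine tendsto_const_nhds.congr' ?_
        filter_upwards [eventually_ge_atTop n0] with n hn
        have h1 : wfrMax f G n0 (f x) ≤ wfrMax f G n (f x) := hmono hn
        have h2 := abs_le.1 (hC x)
        simp only [wfrMax]
        rw [max_eq_right (by linarith)]
        ring
    have hi : ∀ n, Integrable (wfrMax f G n) μ := by
      intro n
      refine Integrable.of_bound (hM n).aestronglyMeasurable (n * C)
        (Eventually.of_forall fun x => ?_)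
      rw [Real.norm_eq_abs, abs_of_nonneg (wfrMax_nonneg f G n x)]
      exact wfrMax_le f G hC0 (fun x => (abs_le.1 (hC x)).2) n x
    have hnn : ∀ n, 0 ≤ ∫ x, (wfrMax f G (n + 1) x - wfrMax f G n (f x)) ∂μ := by
      intro n
      have hcomp : ∫ x, wfrMax f G n (f x) ∂μ = ∫ x, wfrMax f G n x ∂μ := by
        conv_rhs => rw [← hμ.toMeasurePreserving.map_eq]
        rw [integral_map hfm.aemeasurable (hM n).aestronglyMeasurable]
      have hic : Integrable (fun x => wfrMax f G n (f x)) μ :=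
        hμ.toMeasurePreserving.integrable_comp_of_integrable (hi n)
      rw [integral_sub (hi (n + 1)) hic, hcomp, sub_nonneg]
      exact integral_mono (hi n) (hi (n + 1)) (wfrMax_mono f G n)
    have := ge_of_tendsto' hlim hnn
    linarith
  · filter_upwards [h] with x hx
    simp only [hE, mem_ofPred_eq, not_forall, not_exists, not_lt] at hx
    obtain ⟨K, hK⟩ := hx
    exact ⟨K, fun n => (wfrMax_sum_le f G n x).trans (hK n)⟩

theorem wfr_ergodic {X : Type*} [MeasurableSpace X] {f : X → X} {μ : Measure X}
    [IsProbabilityMeasure μ] (hμ : Ergodic f μ) {F : X → ℝ} (hF : Measurable F) {C : ℝ}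
    (hC : ∀ x, |F x| ≤ C) {a : ℝ} (hint : ∫ x, F x ∂μ < a) :
    ∀ᵐ x ∂μ, ∀ᶠ n : ℕ in atTop, ∑ i ∈ Finset.range n, F (f^[i] x) ≤ n * a := by
  obtain ⟨b, hb1, hb2⟩ := exists_between hint
  have hFi : Integrable F μ := Integrable.of_bound hF.aestronglyMeasurable C
    (Eventually.of_forall hC)
  have := wfr_bounded hμ (G := fun x => F x - b) (hF.sub_const b) (C := C + |b|)
    (fun x => (abs_sub _ _).trans (by have := hC x; linarith)) (by
      rw [integral_sub hFi (integrable_const _)]; simp; linarith)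
  filter_upwards [this] with x hx
  obtain ⟨K, hK⟩ := hx
  obtain ⟨L, hL⟩ := exists_nat_ge (K / (a - b))
  filter_upwards [eventually_ge_atTop L] with n hn
  have h1 := hK n
  rw [Finset.sum_sub_distrib] at h1
  simp only [Finset.sum_const, Finset.card_range, nsmul_eq_mul] at h1
  have h2 : (L : ℝ) ≤ n := by exact_mod_cast hn
  have h3 : K / (a - b) ≤ (n : ℝ) := hL.trans h2
  rw [div_le_iff₀ (by linarith)] at h3
  linarith

/-- The `n`-name of `x`. -/
def wfrName {X : Type*} (f : X → X) {m : ℕ} (P : X → Fin m) (n : ℕ) (x : X) : Fin n → Fin m :=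
  fun i => P (f^[(i : ℕ)] x)

/-- The measure of the cylinder of a word. -/
noncomputable def wfrPr {X : Type*} [MeasurableSpace X] (μ : Measure X)
    (f : X → X) {m : ℕ} (P : X → Fin m) (n : ℕ) (a : Fin n → Fin m) : ℝ :=
  (μ {x | ∀ i : Fin n, P (f^[(i : ℕ)] x) = a i}).toReal

theorem wfrPr_set {X : Type*} (f : X → X) {m : ℕ} (P : X → Fin m) (n : ℕ) (a : Fin n → Fin m) :
    {x | ∀ i : Fin n, P (f^[(i : ℕ)] x) = a i} = wfrName f P n ⁻¹' {a} := by
  ext x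
  simp [wfrName, funext_iff]

theorem wfrName_measurable {X : Type*} [MeasurableSpace X] {f : X → X} (hf : Measurable f)
    {m : ℕ} {P : X → Fin m} (hP : Measurable P) (n : ℕ) : Measurable (wfrName f P n) :=
  measurable_pi_lambda _ fun i => hP.comp (hf.iterate i)

theorem wfrPr_nonneg {X : Type*} [MeasurableSpace X] (μ : Measure X)
    (f : X → X) {m : ℕ} (P : X → Fin m) (n : ℕ) (a : Fin n → Fin m) : 0 ≤ wfrPr μ f P n a :=
  ENNReal.toReal_nonneg

theorem wfrName_tail {X : Type*} (f : X → X) {m : ℕ} (P : X → Fin m) (n : ℕ) (x : X) :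
    Fin.tail (wfrName f P (n + 1) x) = wfrName f P n (f x) := by
  ext i
  simp [wfrName, Fin.tail]

theorem wfr_integral_log {X : Type*} [MeasurableSpace X] {f : X → X} {μ : Measure X}
    [IsProbabilityMeasure μ] (hf : Measurable f)
    {m : ℕ} {P : X → Fin m} (hP : Measurable P) (n : ℕ) :
    ∫ x, Real.log (wfrPr μ f P n (wfrName f P n x)) ∂μ = - refinedEntropy μ f P n := by
  have hn := wfrName_measurable hf hP n
  have h1 : ∫ a, Real.log (wfrPr μ f P n a) ∂(μ.map (wfrName f P n)) =
      ∫ x, Real.log (wfrPr μ f P n (wfrName f P n x)) ∂μ :=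
    integral_map hn.aemeasurable (measurable_of_finite _).aestronglyMeasurable
  have : IsProbabilityMeasure (μ.map (wfrName f P n)) :=
    Measure.isProbabilityMeasure_map hn.aemeasurable
  rw [← h1, integral_fintype (Integrable.of_finite), refinedEntropy, ← Finset.sum_neg_distrib]
  refine Finset.sum_congr rfl fun a _ => ?_
  rw [Measure.real, Measure.map_apply hn (measurableSet_singleton a), ← wfrPr_set]
  simp [Real.negMulLog, wfrPr]

theorem wfr_integral_log_comp {X : Type*} [MeasurableSpace X] {f : X → X} {μ : Measure X}
    [IsProbabilityMeasure μ] (hf : MeasurePreserving f μ μ)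
    {m : ℕ} {P : X → Fin m} (hP : Measurable P) (n : ℕ) :
    ∫ x, Real.log (wfrPr μ f P n (wfrName f P n (f x))) ∂μ = - refinedEntropy μ f P n := by
  rw [← wfr_integral_log hf.measurable hP]
  have h : ∫ y, Real.log (wfrPr μ f P n (wfrName f P n y)) ∂(μ.map f) =
      ∫ x, Real.log (wfrPr μ f P n (wfrName f P n (f x))) ∂μ :=
    integral_map hf.measurable.aemeasurable
      ((measurable_of_finite fun a => Real.log (wfrPr μ f P n a)).comp
        (wfrName_measurable hf.measurable hP n)).aestronglyMeasurable
  rw [← h, hf.map_eq]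

theorem wfr_pos {X : Type*} [MeasurableSpace X] {f : X → X} {μ : Measure X}
    [IsProbabilityMeasure μ]
    {m : ℕ} {P : X → Fin m} (n : ℕ) :
    ∀ᵐ x ∂μ, 0 < wfrPr μ f P n (wfrName f P n x) := by
  have h : ∀ a : Fin n → Fin m, ∀ᵐ x ∂μ, wfrPr μ f P n a = 0 → wfrName f P n x ≠ a := by
    intro a
    by_cases ha : wfrPr μ f P n a = 0
    · rw [wfrPr, wfrPr_set] at ha
      have h0 : μ (wfrName f P n ⁻¹' {a}) = 0 := by
        rcases (ENNReal.toReal_eq_zero_iff _).1 ha with h | h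
        · exact h
        · exact absurd h (measure_ne_top _ _)
      filter_upwards [measure_eq_zero_iff_ae_notMem.1 h0] with x hx _ h'
      exact hx h'
    · exact Eventually.of_forall fun x h => absurd h ha
  filter_upwards [ae_all_iff.2 h] with x hx
  refine lt_of_le_of_ne (wfrPr_nonneg _ _ _ _ _) fun h' => ?_
  exact hx _ h'.symm rfl

theorem wfr_pos_all {X : Type*} [MeasurableSpace X] {f : X → X} {μ : Measure X}
    [IsProbabilityMeasure μ] (hf : MeasurePreserving f μ μ)
    {m : ℕ} {P : X → Fin m} (n : ℕ) :
    ∀ᵐ x ∂μ, ∀ i : ℕ, 0 < wfrPr μ f P n (wfrName f P n (f^[i] x)) := by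
  rw [ae_all_iff]
  intro i
  exact (hf.iterate i).quasiMeasurePreserving.ae (wfr_pos n)

theorem wfrPr_sum_cons {X : Type*} [MeasurableSpace X] {f : X → X} {μ : Measure X}
    [IsProbabilityMeasure μ] (hf : MeasurePreserving f μ μ)
    {m : ℕ} {P : X → Fin m} (hP : Measurable P) (n : ℕ) (a : Fin n → Fin m) :
    ∑ b, wfrPr μ f P (n + 1) (Fin.cons b a) = wfrPr μ f P n a := by
  have hn := wfrName_measurable hf.measurable hP
  simp only [wfrPr, wfrPr_set]
  rw [← ENNReal.toReal_sum (fun _ _ => measure_ne_top _ _),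
    ← hf.measure_preimage (hn n (measurableSet_singleton a)).nullMeasurableSet]
  rw [← measure_biUnion_finset]
  · congr 2
    ext x
    simp only [Finset.mem_univ, iUnion_true, mem_iUnion, mem_preimage, mem_singleton_iff]
    rw [← wfrName_tail]
    constructor
    · rintro ⟨b, hb⟩
      rw [hb]; simp
    · intro h
      refine ⟨wfrName f P (n + 1) x 0, ?_⟩
      rw [← h]; simp
  · intro b _ c _ hbc
    refine Set.disjoint_left.2 fun x hx hx' => hbc ?_
    have h : (Fin.cons b a : Fin (n + 1) → Fin m) = Fin.cons c a := by
      rw [← (show _ = _ from hx), ← (show _ = _ from hx')]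
    simpa using congrFun h 0
  · intro b _
    exact hn _ (measurableSet_singleton _)

/-- Backward Markov weights of words. -/
noncomputable def wfrW {X : Type*} [MeasurableSpace X] (μ : Measure X)
    (f : X → X) {m : ℕ} (P : X → Fin m) (k : ℕ) : (n : ℕ) → (Fin (k + n) → Fin m) → ℝ
  | 0, _ => 1
  | n + 1, a =>
    let a' : Fin (k + n + 1) → Fin m := a
    let c : Fin (k + 1) → Fin m := fun i => a' (Fin.castLE (by omega) i)
    wfrPr μ f P (k + 1) c / wfrPr μ f P k (Fin.tail c) * wfrW μ f P k n (Fin.tail a')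

theorem wfrW_nonneg {X : Type*} [MeasurableSpace X] (μ : Measure X)
    (f : X → X) {m : ℕ} (P : X → Fin m) (k n : ℕ) : ∀ a, 0 ≤ wfrW μ f P k n a := by
  induction n with
  | zero => intro a; simp [wfrW]
  | succ n ih =>
    intro a
    exact mul_nonneg (div_nonneg (wfrPr_nonneg _ _ _ _ _) (wfrPr_nonneg _ _ _ _ _)) (ih _)

theorem wfrW_sum {X : Type*} [MeasurableSpace X] {f : X → X} {μ : Measure X}
    [IsProbabilityMeasure μ] (hf : MeasurePreserving f μ μ)
    {m : ℕ} {P : X → Fin m} (hP : Measurable P) (k n : ℕ) :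
    ∑ a, wfrW μ f P k n a ≤ (m : ℝ) ^ k := by
  induction n with
  | zero => simp [wfrW]
  | succ n ih =>
    refine le_trans ?_ ih
    have e := (Fin.consEquiv (n := k + n) (fun _ => Fin m)).sum_comp (wfrW μ f P k (n + 1))
    refine (le_of_eq e.symm).trans ?_
    rw [Fintype.sum_prod_type, Finset.sum_comm]
    refine Finset.sum_le_sum fun a _ => ?_
    have hW := wfrW_nonneg μ f P k n a
    set c : Fin k → Fin m := fun i => a (Fin.castLE (by omega) i) with hc
    have key : ∀ b : Fin m, wfrW μ f P k (n + 1) (Fin.consEquiv (n := k + n) (fun _ => Fin m) (b, a))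
        = wfrPr μ f P (k + 1) (Fin.cons b c) / wfrPr μ f P k c * wfrW μ f P k n a := by
      intro b
      have h1 : (fun i : Fin (k + 1) => (Fin.cons b a : Fin (k + n + 1) → Fin m)
          (Fin.castLE (by omega) i)) = Fin.cons b c := by
        ext i
        refine Fin.cases ?_ (fun j => ?_) i
        · rfl
        · rfl
      have h2 : wfrW μ f P k (n + 1) (Fin.consEquiv (n := k + n) (fun _ => Fin m) (b, a)) =
        wfrPr μ f P (k + 1) (fun i : Fin (k + 1) => (Fin.cons b a : Fin (k + n + 1) → Fin m)
          (Fin.castLE (by omega) i)) / wfrPr μ f P k (Fin.tail (fun i : Fin (k + 1) =>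
          (Fin.cons b a : Fin (k + n + 1) → Fin m)
          (Fin.castLE (by omega) i))) * wfrW μ f P k n a := rfl
      rw [h2, h1, Fin.tail_cons]
    rw [Finset.sum_congr rfl fun b _ => key b, ← Finset.sum_mul, ← Finset.sum_div,
      wfrPr_sum_cons hf hP]
    exact mul_le_of_le_one_left hW (div_self_le_one _)

/-- Backward information function. -/
noncomputable def wfrF {X : Type*} [MeasurableSpace X] (μ : Measure X)
    (f : X → X) {m : ℕ} (P : X → Fin m) (k : ℕ) (x : X) : ℝ :=
  Real.log (wfrPr μ f P k (wfrName f P k (f x)))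
    - Real.log (wfrPr μ f P (k + 1) (wfrName f P (k + 1) x))

theorem wfrW_name {X : Type*} [MeasurableSpace X] {f : X → X} {μ : Measure X}
    {m : ℕ} {P : X → Fin m} (k n : ℕ) : ∀ x : X,
    (∀ i : ℕ, 0 < wfrPr μ f P k (wfrName f P k (f^[i] x))) →
    (∀ i : ℕ, 0 < wfrPr μ f P (k + 1) (wfrName f P (k + 1) (f^[i] x))) →
    wfrW μ f P k n (wfrName f P (k + n) x) =
      Real.exp (- ∑ i ∈ Finset.range n, wfrF μ f P k (f^[i] x)) := by
  induction n with
  | zero => intro x _ _; simp [wfrW]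
  | succ n ih =>
    intro x h1 h2
    have h := ih (f x) (fun i => h1 (i + 1)) (fun i => h2 (i + 1))
    have hs : wfrW μ f P k (n + 1) (wfrName f P (k + (n + 1)) x) =
      wfrPr μ f P (k + 1) (wfrName f P (k + 1) x) /
        wfrPr μ f P k (Fin.tail (wfrName f P (k + 1) x)) *
        wfrW μ f P k n (Fin.tail (wfrName f P (k + n + 1) x)) := rfl
    rw [hs, wfrName_tail, wfrName_tail, h, Finset.sum_range_succ', neg_add, Real.exp_add, mul_comm]
    congr 1
    have p1 := h1 1
    have p2 := h2 0
    simp only [Function.iterate_one, Function.iterate_zero, id] at p1 p2 ⊢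
    rw [wfrF, neg_sub, Real.exp_sub, Real.exp_log p2, Real.exp_log p1]

theorem wfrF_ergodic {X : Type*} [MeasurableSpace X] {f : X → X} {μ : Measure X}
    [IsProbabilityMeasure μ] (hμ : Ergodic f μ)
    {m : ℕ} {P : X → Fin m} (hP : Measurable P) (k : ℕ) {a : ℝ}
    (ha : refinedEntropy μ f P (k + 1) - refinedEntropy μ f P k < a) :
    ∀ᵐ x ∂μ, ∀ᶠ n : ℕ in atTop,
      Real.exp (- (n * a)) ≤ wfrW μ f P k n (wfrName f P (k + n) x) := by
  have hf := hμ.toMeasurePreserving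
  have hn := wfrName_measurable hf.measurable hP
  have bdd : ∀ (j : ℕ) (y : X), |Real.log (wfrPr μ f P j (wfrName f P j y))| ≤
      ∑ b : Fin j → Fin m, |Real.log (wfrPr μ f P j b)| := fun j y =>
    Finset.single_le_sum (f := fun b => |Real.log (wfrPr μ f P j b)|)
      (fun _ _ => abs_nonneg _) (Finset.mem_univ (wfrName f P j y))
  have m1 : Measurable fun x => Real.log (wfrPr μ f P k (wfrName f P k (f x))) :=
    (measurable_of_finite fun b => Real.log (wfrPr μ f P k b)).comp ((hn k).comp hf.measurable)
  have m2 : Measurable fun x => Real.log (wfrPr μ f P (k + 1) (wfrName f P (k + 1) x)) :=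
    (measurable_of_finite fun b => Real.log (wfrPr μ f P (k + 1) b)).comp (hn (k + 1))
  have hint : ∫ x, wfrF μ f P k x ∂μ < a := by
    unfold wfrF
    rw [integral_sub (Integrable.of_bound m1.aestronglyMeasurable _
      (Eventually.of_forall fun x => bdd k (f x))) (Integrable.of_bound m2.aestronglyMeasurable _
      (Eventually.of_forall fun x => bdd (k + 1) x)), wfr_integral_log_comp hf hP,
      wfr_integral_log hf.measurable hP]
    linarith
  filter_upwards [wfr_ergodic hμ (F := wfrF μ f P k) (m1.sub m2)
    (fun x => (abs_sub _ _).trans (add_le_add (bdd k (f x)) (bdd (k + 1) x))) hint,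
    wfr_pos_all hf (P := P) k, wfr_pos_all hf (P := P) (k + 1)] with x h1 h2 h3
  filter_upwards [h1] with n hn
  rw [wfrW_name k n x h2 h3]
  exact Real.exp_le_exp.2 (by linarith)

theorem wfr_kac {X : Type*} [MeasurableSpace X] {f : X → X} {μ : Measure X}
    [IsProbabilityMeasure μ] (hf : MeasurePreserving f μ μ) {A : Set X} (hA : MeasurableSet A)
    (N : ℕ) : (N + 1 : ℝ) * μ.real {x | x ∈ A ∧ ∀ j, 1 ≤ j → j ≤ N → f^[j] x ∉ A} ≤ 1 := by
  set B : Set X := {x | x ∈ A ∧ ∀ j, 1 ≤ j → j ≤ N → f^[j] x ∉ A} with hB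
  have hBm : MeasurableSet B := by
    have : B = A ∩ ⋂ j : ℕ, ⋂ _ : 1 ≤ j, ⋂ _ : j ≤ N, (f^[j] ⁻¹' A)ᶜ := by
      ext x; simp [hB]
    rw [this]
    exact hA.inter (MeasurableSet.iInter fun j => MeasurableSet.iInter fun _ =>
      MeasurableSet.iInter fun _ => ((hf.measurable.iterate j) hA).compl)
  have hlt : ∀ i j : ℕ, i < j → j ≤ N → ∀ x, f^[i] x ∈ B → f^[j] x ∈ B → False := by
    intro i j hij hj x hi hj'
    have := hi.2 (j - i) (by omega) (by omega)
    rw [← Function.iterate_add_apply, Nat.sub_add_cancel hij.le] at this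
    exact this hj'.1
  have hd : (↑(Finset.range (N + 1)) : Set ℕ).PairwiseDisjoint (fun j => f^[j] ⁻¹' B) := by
    intro i hi j hj hij
    refine Set.disjoint_left.2 fun x hx hx' => ?_
    simp only [Finset.coe_range, mem_Iio] at hi hj
    rcases lt_or_gt_of_ne hij with h | h
    · exact hlt i j h (by omega) x hx hx'
    · exact hlt j i h (by omega) x hx' hx
  have h1 := measureReal_biUnion_finset (μ := μ) hd
    (fun j _ => (hf.measurable.iterate j) hBm)
  have h2 : ∀ j, μ.real (f^[j] ⁻¹' B) = μ.real B := fun j =>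
    congrArg ENNReal.toReal ((hf.iterate j).measure_preimage hBm.nullMeasurableSet)
  simp only [h2, Finset.sum_const, Finset.card_range, nsmul_eq_mul] at h1
  push_cast at h1
  rw [← h1]
  exact measureReal_le_one

theorem wfr_norep {X : Type*} [MeasurableSpace X] {f : X → X} {μ : Measure X}
    [IsProbabilityMeasure μ] (hf : MeasurePreserving f μ μ)
    {m : ℕ} {P : X → Fin m} (hP : Measurable P) (k n N : ℕ) {t : ℝ} (ht : 0 < t) :
    μ.real {x | t ≤ wfrW μ f P k n (wfrName f P (k + n) x) ∧
      ∀ j, 1 ≤ j → j ≤ N → wfrName f P (k + n) (f^[j] x) ≠ wfrName f P (k + n) x} ≤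
      (m : ℝ) ^ k / t / (N + 1) := by
  set B : (Fin (k + n) → Fin m) → Set X := fun a =>
    {x | x ∈ wfrName f P (k + n) ⁻¹' {a} ∧ ∀ j, 1 ≤ j → j ≤ N →
      f^[j] x ∉ wfrName f P (k + n) ⁻¹' {a}} with hB
  have hn := wfrName_measurable hf.measurable hP (k + n)
  have hk : ∀ a, μ.real (B a) ≤ 1 / (N + 1) := by
    intro a
    rw [le_div_iff₀ (by positivity), mul_comm]
    exact wfr_kac hf (hn (measurableSet_singleton a)) N
  set S := Finset.univ.filter fun a => t ≤ wfrW μ f P k n a with hS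
  have hsub : {x | t ≤ wfrW μ f P k n (wfrName f P (k + n) x) ∧
      ∀ j, 1 ≤ j → j ≤ N → wfrName f P (k + n) (f^[j] x) ≠ wfrName f P (k + n) x} ⊆
      ⋃ a ∈ S, B a := by
    rintro x ⟨h1, h2⟩
    simp only [mem_iUnion]
    refine ⟨wfrName f P (k + n) x, ?_, rfl, fun j hj hj' h => h2 j hj hj' h⟩
    simp [hS, h1]
  calc _ ≤ μ.real (⋃ a ∈ S, B a) := measureReal_mono hsub (measure_ne_top _ _)
    _ ≤ ∑ a ∈ S, μ.real (B a) := measureReal_biUnion_finset_le _ _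
    _ ≤ ∑ a ∈ S, wfrW μ f P k n a / t / (N + 1) := by
        refine Finset.sum_le_sum fun a ha => (hk a).trans ?_
        have : t ≤ wfrW μ f P k n a := by simpa [hS] using ha
        gcongr
        rwa [le_div_iff₀ ht, one_mul]
    _ ≤ ∑ a, wfrW μ f P k n a / t / (N + 1) :=
        Finset.sum_le_univ_sum_of_nonneg fun a =>
          div_nonneg (div_nonneg (wfrW_nonneg _ _ _ _ _ _) ht.le) (by positivity)
    _ ≤ _ := by
        rw [← Finset.sum_div, ← Finset.sum_div]
        gcongr
        exact wfrW_sum hf hP k n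

theorem wfr_entropy_nonneg {X : Type*} [MeasurableSpace X] {f : X → X} {μ : Measure X}
    [IsProbabilityMeasure μ] {m : ℕ} {P : X → Fin m} : 0 ≤ partitionEntropy μ f P := by
  refine Real.iInf_nonneg fun n => div_nonneg (Finset.sum_nonneg fun a _ => ?_) (by positivity)
  exact Real.negMulLog_nonneg ENNReal.toReal_nonneg measureReal_le_one

theorem wfr_increment {X : Type*} [MeasurableSpace X] {f : X → X} {μ : Measure X}
    [IsProbabilityMeasure μ] {m : ℕ} {P : X → Fin m} {a : ℝ} (ha : partitionEntropy μ f P < a) :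
    ∃ k, refinedEntropy μ f P (k + 1) - refinedEntropy μ f P k < a := by
  obtain ⟨n, hn⟩ := exists_lt_of_ciInf_lt ha
  by_contra! hcon
  have h0 : refinedEntropy μ f P 0 = 0 := by simp [refinedEntropy]
  have : ∀ j : ℕ, j * a ≤ refinedEntropy μ f P j := by
    intro j
    induction j with
    | zero => simp [h0]
    | succ j ih => have := hcon j; push_cast; linarith
  have h2 := this (n + 1)
  rw [div_lt_iff₀ (by positivity)] at hn
  push_cast at h2
  linarith

theorem wfr_bc {X : Type*} [MeasurableSpace X] {μ : Measure X} [IsProbabilityMeasure μ]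
    (s : ℕ → Set X) {C ε : ℝ} (hε : 0 < ε)
    (h : ∀ᶠ n : ℕ in atTop, μ.real (s n) ≤ C * Real.exp (-(n * ε))) :
    ∀ᵐ x ∂μ, ∀ᶠ n in atTop, x ∉ s n := by
  have hs : Summable fun n => μ.real (s n) := by
    have h1 : Summable fun n : ℕ => C * Real.exp (-(n * ε)) := by
      refine Summable.mul_left _ ?_
      have := Real.summable_exp_nat_mul_iff.2 (neg_lt_zero.2 hε)
      simpa using this
    refine h1.of_norm_bounded_eventually_nat ?_
    filter_upwards [h] with n hn
    rwa [Real.norm_eq_abs, abs_of_nonneg measureReal_nonneg]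
  refine ae_eventually_notMem ?_
  have : ∀ n, μ (s n) = ENNReal.ofReal (μ.real (s n)) := fun n => by simp
  simp_rw [this]
  rw [← ENNReal.ofReal_tsum_of_nonneg (fun _ => measureReal_nonneg) hs]
  exact ENNReal.ofReal_ne_top

theorem wfr_return {X : Type*} [MeasurableSpace X] {f : X → X} {μ : Measure X}
    [IsProbabilityMeasure μ] (hμ : Ergodic f μ)
    {m : ℕ} {P : X → Fin m} (hP : Measurable P) {ε : ℝ} (hε : 0 < ε) :
    ∀ᵐ x ∂μ, ∀ᶠ N : ℕ in atTop, ∃ j, 1 ≤ j ∧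
      j ≤ ⌊Real.exp (N * (partitionEntropy μ f P + 2 * ε))⌋₊ ∧
      ∀ i < N, P (f^[i] (f^[j] x)) = P (f^[i] x) := by
  set h := partitionEntropy μ f P with hh
  have hh0 : 0 ≤ h := wfr_entropy_nonneg
  have hf := hμ.toMeasurePreserving
  obtain ⟨k, hk⟩ := wfr_increment (μ := μ) (f := f) (P := P) (a := h + ε) (by linarith)
  set M : ℕ → ℕ := fun N => ⌊Real.exp (N * (h + 2 * ε))⌋₊ with hM
  have bc := wfr_bc (μ := μ) (fun n : ℕ => {x | Real.exp (- (n * (h + ε))) ≤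
      wfrW μ f P k n (wfrName f P (k + n) x) ∧
      ∀ j, 1 ≤ j → j ≤ M (k + n) → wfrName f P (k + n) (f^[j] x) ≠ wfrName f P (k + n) x})
      (C := (m : ℝ) ^ k) hε (Eventually.of_forall fun n => by
        refine (wfr_norep hf hP k n (M (k + n)) (Real.exp_pos _)).trans ?_
        have h1 : Real.exp (n * (h + 2 * ε)) ≤ (M (k + n) : ℝ) + 1 := by
          refine le_trans (Real.exp_le_exp.2 ?_) (Nat.lt_floor_add_one _).le
          gcongr
          omega
        calc _ ≤ (m : ℝ) ^ k / Real.exp (- (n * (h + ε))) / Real.exp (n * (h + 2 * ε)) := by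
              gcongr
          _ = _ := by
              rw [div_div, ← Real.exp_add, div_eq_mul_inv, ← Real.exp_neg]
              congr 2
              ring)
  filter_upwards [bc, wfrF_ergodic hμ hP k hk] with x h1 h2
  have h3 := h1.and h2
  obtain ⟨n0, hn0⟩ := eventually_atTop.1 h3
  filter_upwards [eventually_ge_atTop (k + n0)] with N hN
  obtain ⟨n, rfl⟩ : ∃ n, N = k + n := ⟨N - k, by omega⟩
  obtain ⟨h4, h5⟩ := hn0 n (by omega)
  by_contra! hcon
  refine h4 ⟨h5, fun j hj hj' heq => ?_⟩
  obtain ⟨i, hi, hi'⟩ := hcon j hj hj'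
  exact hi' (congrFun heq ⟨i, hi⟩)

/-- **Upper bound via the free energy (first return times).** For an ergodic `μ`, a
continuous potential `φ`, a finite measurable partition `Q` and a mistake function `g`,
for `μ`-a.e. `x`:
`limsup_n (1/n) log [Σ_{j=0}^{R_n(g;x,Q)} e^{S_nφ(f^j x)}] ≤ h_μ(f,Q) + c_{φ,1}`,
where `c_{φ,1} = limsup_n (1/n) log ∫ e^{S_nφ} dμ`. -/
theorem weighted_first_return_rate_le {X : Type*} [MetricSpace X] [CompactSpace X]
    [MeasurableSpace X] [BorelSpace X] {f : X → X} (hf : Continuous f)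
    {μ : Measure X} [IsProbabilityMeasure μ] (hμ : Ergodic f μ)
    {φ : X → ℝ} (hφ : Continuous φ)
    {m : ℕ} {P : X → Fin m} (hP : Measurable P)
    {g : ℕ → ℕ} (hgmono : ∀ n, g n ≤ g (n + 1))
    (hgsub : Tendsto (fun n : ℕ => (g n : ℝ) / n) atTop (nhds 0)) :
    ∀ᵐ x ∂μ,
      limsup (fun n : ℕ =>
          Real.log (∑ j ∈ Finset.range (cylReturn f P g n x + 1),
            Real.exp (∑ i ∈ Finset.range n, φ (f^[i] (f^[j] x)))) / n) atTop ≤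
        partitionEntropy μ f P +
          limsup (fun n : ℕ =>
            Real.log (∫ y, Real.exp (∑ i ∈ Finset.range n, φ (f^[i] y)) ∂μ) / n)
            atTop := by
  have hne : Nonempty X := nonempty_of_isProbabilityMeasure μ
  obtain ⟨x0⟩ := hne
  have hmp := hμ.toMeasurePreserving
  obtain ⟨K, hK⟩ : ∃ K : ℝ, ∀ x, |φ x| ≤ K := by
    obtain ⟨K, hK⟩ := isCompact_univ.exists_bound_of_continuousOn hφ.continuousOn
    exact ⟨K, fun x => hK x (mem_univ x)⟩
  have hK0 : 0 ≤ K := (abs_nonneg _).trans (hK x0)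
  have hSb : ∀ (n : ℕ) (y : X), |∑ i ∈ Finset.range n, φ (f^[i] y)| ≤ n * K := by
    intro n y
    refine (Finset.abs_sum_le_sum_abs _ _).trans ?_
    refine (Finset.sum_le_sum fun i _ => hK (f^[i] y)).trans ?_
    simp
  have hSc : ∀ n : ℕ, Continuous fun y => Real.exp (∑ i ∈ Finset.range n, φ (f^[i] y)) := by
    intro n
    exact Real.continuous_exp.comp (continuous_finsetSum _ fun i _ => hφ.comp (hf.iterate i))
  set h := partitionEntropy μ f P with hh
  have hh0 : 0 ≤ h := wfr_entropy_nonneg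
  set I : ℕ → ℝ := fun n => ∫ y, Real.exp (∑ i ∈ Finset.range n, φ (f^[i] y)) ∂μ with hI
  have hSi : ∀ n : ℕ, Integrable (fun y => Real.exp (∑ i ∈ Finset.range n, φ (f^[i] y))) μ := by
    intro n
    refine Integrable.of_bound (hSc n).measurable.aestronglyMeasurable (Real.exp (n * K))
      (Eventually.of_forall fun y => ?_)
    rw [Real.norm_eq_abs, abs_of_pos (Real.exp_pos _)]
    exact Real.exp_le_exp.2 (abs_le.1 (hSb n y)).2
  have hIpos : ∀ n, 0 < I n := fun n => integral_exp_pos (hSi n)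
  have hIle : ∀ n : ℕ, I n ≤ Real.exp (n * K) := by
    intro n
    have := integral_mono (hSi n) (integrable_const (Real.exp (n * K)))
      (fun y => Real.exp_le_exp.2 (abs_le.1 (hSb n y)).2)
    simpa using this
  set c := limsup (fun n : ℕ => Real.log (I n) / n) atTop with hc
  have hbd : IsBoundedUnder (· ≤ ·) atTop (fun n : ℕ => Real.log (I n) / n) := by
    refine isBoundedUnder_of ⟨K, fun n => ?_⟩
    rcases Nat.eq_zero_or_pos n with rfl | hn
    · simpa using hK0
    · have hn' : (0 : ℝ) < n := by exact_mod_cast hn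
      rw [div_le_iff₀ hn', Real.log_le_iff_le_exp (hIpos n), mul_comm]
      exact hIle n
  have hIev : ∀ ε : ℝ, 0 < ε → ∀ᶠ n : ℕ in atTop, I n ≤ Real.exp (n * (c + ε)) := by
    intro ε hε
    filter_upwards [eventually_lt_of_limsup_lt (show c < c + ε by linarith) hbd,
      eventually_gt_atTop 0] with n hn hn0
    have hn' : (0 : ℝ) < n := by exact_mod_cast hn0
    rw [div_lt_iff₀ hn', Real.log_lt_iff_lt_exp (hIpos n), mul_comm] at hn
    exact hn.le
  have main : ∀ ε : ℝ, 0 < ε → ∀ᵐ x ∂μ, ∀ᶠ n : ℕ in atTop,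
      Real.log (∑ j ∈ Finset.range (cylReturn f P g n x + 1),
            Real.exp (∑ i ∈ Finset.range n, φ (f^[i] (f^[j] x)))) / n ≤ h + c + 4 * ε := by
    intro ε hε
    set M : ℕ → ℕ := fun N => ⌊Real.exp (N * (h + 2 * ε))⌋₊ with hM
    have hMle : ∀ n, (M n : ℝ) + 1 ≤ 2 * Real.exp (n * (h + 2 * ε)) := by
      intro n
      have h1 : (M n : ℝ) ≤ Real.exp (n * (h + 2 * ε)) := Nat.floor_le (Real.exp_pos _).le
      have h2 : 1 ≤ Real.exp (n * (h + 2 * ε)) := Real.one_le_exp (by positivity)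
      linarith
    have bc := wfr_bc (μ := μ) (fun n : ℕ => {x | Real.exp (n * (h + c + 4 * ε)) ≤
        ∑ j ∈ Finset.range (M n + 1), Real.exp (∑ i ∈ Finset.range n, φ (f^[i] (f^[j] x)))})
      (C := 2) hε (by
        filter_upwards [hIev ε hε] with n hn
        have hji : ∀ j, Integrable
            (fun x => Real.exp (∑ i ∈ Finset.range n, φ (f^[i] (f^[j] x)))) μ := fun j =>
          (hmp.iterate j).integrable_comp_of_integrable (hSi n)
        have hjI : ∀ j, ∫ x, Real.exp (∑ i ∈ Finset.range n, φ (f^[i] (f^[j] x))) ∂μ = I n := by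
          intro j
          change _ = ∫ y, Real.exp (∑ i ∈ Finset.range n, φ (f^[i] y)) ∂μ
          conv_rhs => rw [← (hmp.iterate j).map_eq]
          rw [integral_map (hmp.iterate j).measurable.aemeasurable
            (hSc n).measurable.aestronglyMeasurable]
        have hmk := mul_meas_ge_le_integral_of_nonneg (μ := μ)
          (f := fun x => ∑ j ∈ Finset.range (M n + 1),
            Real.exp (∑ i ∈ Finset.range n, φ (f^[i] (f^[j] x))))
          (Eventually.of_forall fun x => Finset.sum_nonneg fun j _ => (Real.exp_pos _).le)
          (integrable_finsetSum _ fun j _ => hji j) (Real.exp (n * (h + c + 4 * ε)))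
        rw [integral_finsetSum _ fun j _ => hji j] at hmk
        simp only [hjI, Finset.sum_const, Finset.card_range, nsmul_eq_mul] at hmk
        push_cast at hmk
        rw [mul_comm, ← le_div_iff₀ (Real.exp_pos _)] at hmk
        refine hmk.trans ?_
        rw [div_le_iff₀ (Real.exp_pos _), mul_assoc, ← Real.exp_add]
        calc ((M n : ℝ) + 1) * I n
            ≤ (2 * Real.exp (n * (h + 2 * ε))) * Real.exp (n * (c + ε)) := by
              gcongr
              exact hMle n
          _ = _ := by
              rw [mul_assoc, ← Real.exp_add]
              congr 2
              ring)
    filter_upwards [bc, wfr_return hμ hP hε] with x h1 h2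
    filter_upwards [h1, h2, eventually_gt_atTop 0] with n h3 h4 hn0
    have hn' : (0 : ℝ) < n := by exact_mod_cast hn0
    obtain ⟨j, hj1, hj2, hj3⟩ := h4
    have hR : cylReturn f P g n x ≤ M n := by
      refine le_trans (Nat.sInf_le ⟨hj1, Finset.range n, subset_rfl, by simp, ?_⟩) hj2
      intro i hi
      exact hj3 i (Finset.mem_range.1 hi)
    have hpos : 0 < ∑ j ∈ Finset.range (cylReturn f P g n x + 1),
        Real.exp (∑ i ∈ Finset.range n, φ (f^[i] (f^[j] x))) :=
      Finset.sum_pos (fun j _ => Real.exp_pos _) (by simp)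
    rw [div_le_iff₀ hn', Real.log_le_iff_le_exp hpos, mul_comm]
    refine le_trans ?_ (not_le.1 h3).le
    refine Finset.sum_le_sum_of_subset_of_nonneg ?_ fun j _ _ => (Real.exp_pos _).le
    exact Finset.range_mono (by omega)
  have main' := ae_all_iff.2 fun r : ℕ => main (1 / ((r : ℝ) + 1)) (by positivity)
  filter_upwards [main'] with x hx
  have hcob : IsCoboundedUnder (· ≤ ·) atTop (fun n : ℕ =>
      Real.log (∑ j ∈ Finset.range (cylReturn f P g n x + 1),
        Real.exp (∑ i ∈ Finset.range n, φ (f^[i] (f^[j] x)))) / n) := by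
    refine IsBoundedUnder.isCoboundedUnder_le (isBoundedUnder_of ⟨-K, fun n => ?_⟩)
    rcases Nat.eq_zero_or_pos n with rfl | hn
    · simpa using hK0
    · have hn' : (0 : ℝ) < n := by exact_mod_cast hn
      have h1 : Real.exp (∑ i ∈ Finset.range n, φ (f^[i] (f^[0] x))) ≤
          ∑ j ∈ Finset.range (cylReturn f P g n x + 1),
            Real.exp (∑ i ∈ Finset.range n, φ (f^[i] (f^[j] x))) :=
        Finset.single_le_sum
          (f := fun j => Real.exp (∑ i ∈ Finset.range n, φ (f^[i] (f^[j] x))))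
          (fun _ _ => (Real.exp_pos _).le) (by simp)
      have h2 := Real.log_le_log (Real.exp_pos _) h1
      rw [Real.log_exp] at h2
      have h3 := (abs_le.1 (hSb n (f^[0] x))).1
      change -K ≤ _
      rw [le_div_iff₀ hn']
      linarith
  refine le_of_forall_pos_le_add fun δ hδ => ?_
  obtain ⟨r, hr⟩ := exists_nat_one_div_lt (show 0 < δ / 4 by positivity)
  refine limsup_le_of_le hcob ?_
  filter_upwards [hx r] with n hn
  linarith
end

section
/- Let (X,f) be a topological dynamical system, μ an f-invariant ergodic Borel probability measure with h_μ(f) > 0, φ: X → ℝ a continuous potential, g a mistake function (for a finite partition Q), and Q a finite measurable partition such that lim_{n→∞} S_n(g;x,Q)/n = 1 for μ-a.e. x. Then for μ-almost every x, limsup_{n→∞} (1/n) log [ Σ_{j=0}^{S_n(g;x,Q)} e^{S_nφ(f^j(x))} ] ≤ c_{φ,1}, where c_{φ,1} = limsup_{n→∞} (1/n) log ∫ e^{S_nφ} dμ is the free energy and S_nφ = Σ_{i=0}^{n−1} φ∘fⁱ. -/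
open Filter MeasureTheory Set Topology
open scoped ENNReal

/-- The sequence `4 log (n+1) / n` tends to zero. -/
theorem aux_log_tendsto :
    Tendsto (fun n : ℕ => 4 * Real.log ((n : ℝ) + 1) / n) atTop (nhds 0) := by
  have h := Real.isLittleO_log_id_atTop.tendsto_div_nhds_zero
  have h1 : Tendsto (fun n : ℕ => (n : ℝ) + 1) atTop atTop :=
    tendsto_atTop_add_const_right _ _ tendsto_natCast_atTop_atTop
  have h2 := h.comp h1
  have h3 : Tendsto (fun n : ℕ => 8 * (Real.log ((n : ℝ) + 1) / ((n : ℝ) + 1))) atTop (nhds 0) := by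
    simpa using h2.const_mul 8
  refine squeeze_zero' (Eventually.of_forall fun n => ?_) ?_ h3
  · have : 0 ≤ Real.log ((n : ℝ) + 1) := Real.log_nonneg (by linarith [n.cast_nonneg (α := ℝ)])
    positivity
  · filter_upwards [eventually_ge_atTop 1] with n hn
    have hn' : (1 : ℝ) ≤ n := by exact_mod_cast hn
    have : 0 ≤ Real.log ((n : ℝ) + 1) := Real.log_nonneg (by linarith)
    rw [← mul_div_assoc, div_le_div_iff₀ (by linarith) (by linarith)]
    nlinarith

/-- Almost everywhere bound on the weighted sums up to time `2n`. -/
theorem aux_bound {X : Type*} [MeasurableSpace X] {f : X → X} {μ : Measure X}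
    [IsProbabilityMeasure μ] (hμ : MeasurePreserving f μ μ) (F : ℕ → X → ℝ)
    (hF : ∀ n, Measurable (F n)) (hpos : ∀ n x, 0 < F n x)
    (hint : ∀ n, Integrable (F n) μ) :
    ∀ᵐ x ∂μ, ∀ᶠ n : ℕ in atTop,
      ∑ j ∈ Finset.range (2 * n + 1), F n (f^[j] x) ≤ ((n : ℝ) + 1) ^ 4 * ∫ y, F n y ∂μ := by
  set I : ℕ → ℝ := fun n => ∫ y, F n y ∂μ with hI
  have hIpos : ∀ n, 0 < I n := fun n => by
    rw [hI]
    rw [integral_pos_iff_support_of_nonneg (fun x => (hpos n x).le) (hint n)]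
    have : Function.support (F n) = Set.univ := by
      ext x; simp [(hpos n x).ne']
    simp [this]
  have hintj : ∀ n j, Integrable (fun x => F n (f^[j] x)) μ := fun n j =>
    (hμ.iterate j).integrable_comp_of_integrable (hint n)
  have hsum : ∀ n, ∫ x, ∑ j ∈ Finset.range (2 * n + 1), F n (f^[j] x) ∂μ = (2 * n + 1) * I n := by
    intro n
    rw [integral_finsetSum _ (fun j _ => hintj n j)]
    have : ∀ j ∈ Finset.range (2 * n + 1), ∫ x, F n (f^[j] x) ∂μ = I n := fun j _ => by
      change ∫ x, F n (f^[j] x) ∂μ = ∫ x, F n x ∂μ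
      have h := (hμ.iterate j).map_eq
      conv_rhs => rw [← h]
      rw [integral_map (hμ.iterate j).measurable.aemeasurable (hF n).aestronglyMeasurable]
    rw [Finset.sum_congr rfl this]
    simp
  set s : ℕ → Set X := fun n =>
    {x | ((n : ℝ) + 1) ^ 4 * I n ≤ ∑ j ∈ Finset.range (2 * n + 1), F n (f^[j] x)} with hs
  have hm : ∀ n, μ (s n) ≤ ENNReal.ofReal (2 * (1 / ((n + 1 : ℕ) : ℝ) ^ 2)) := by
    intro n
    have hM := mul_meas_ge_le_integral_of_nonneg (μ := μ)
      (f := fun x => ∑ j ∈ Finset.range (2 * n + 1), F n (f^[j] x))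
      (Eventually.of_forall fun x => Finset.sum_nonneg fun j _ => (hpos n _).le)
      (integrable_finsetSum _ (fun j _ => hintj n j)) (((n : ℝ) + 1) ^ 4 * I n)
    rw [hsum n] at hM
    have hn : (0 : ℝ) ≤ n := n.cast_nonneg
    have h1 : ((n : ℝ) + 1) ^ 4 * μ.real (s n) ≤ 2 * n + 1 := by
      refine le_of_mul_le_mul_right ?_ (hIpos n)
      calc _ = ((n : ℝ) + 1) ^ 4 * I n * μ.real (s n) := by ring
        _ ≤ _ := hM
    rw [← ofReal_measureReal]
    apply ENNReal.ofReal_le_ofReal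
    push_cast
    rw [mul_one_div, le_div_iff₀ (by positivity)]
    have h2 : (0 : ℝ) < ((n : ℝ) + 1) ^ 2 := by positivity
    refine le_of_mul_le_mul_right ?_ h2
    nlinarith
  have hfin : ∑' n, μ (s n) ≠ ∞ := by
    have hsm : Summable (fun n : ℕ => 2 * (1 / ((n + 1 : ℕ) : ℝ) ^ 2)) := by
      have := (Real.summable_one_div_nat_pow (p := 2)).2 (by norm_num)
      exact ((summable_nat_add_iff 1).2 this).mul_left 2
    exact ne_top_of_le_ne_top hsm.tsum_ofReal_ne_top (ENNReal.tsum_le_tsum hm)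
  filter_upwards [ae_eventually_notMem hfin] with x hx
  filter_upwards [hx] with n hn
  simp only [hs, Set.mem_ofPred_eq, not_le] at hn
  exact hn.le

/-- **Upper bound via the free energy (minimal return times).** For an ergodic `μ` with
positive entropy, a continuous potential `φ`, a finite measurable partition `Q` and a
mistake function `g` such that `S_n(g;x,Q)/n → 1` a.e., for `μ`-a.e. `x`:
`limsup_n (1/n) log [Σ_{j=0}^{S_n(g;x,Q)} e^{S_nφ(f^j x)}] ≤ c_{φ,1}`,
where `c_{φ,1} = limsup_n (1/n) log ∫ e^{S_nφ} dμ`. -/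
theorem weighted_minimal_return_rate_le {X : Type*} [MetricSpace X] [CompactSpace X]
    [MeasurableSpace X] [BorelSpace X] {f : X → X} (hf : Continuous f)
    {μ : Measure X} [IsProbabilityMeasure μ] (hμ : Ergodic f μ)
    (hpos : 0 < ksEntropy μ f)
    {φ : X → ℝ} (hφ : Continuous φ)
    {m : ℕ} {P : X → Fin m} (hP : Measurable P)
    {g : ℕ → ℕ} (hgmono : ∀ n, g n ≤ g (n + 1))
    (hgsub : Tendsto (fun n : ℕ => (g n : ℝ) / n) atTop (nhds 0))
    (hlin : ∀ᵐ x ∂μ,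
      Tendsto (fun n : ℕ => (cylMinReturn f P g n x : ℝ) / n) atTop (nhds 1)) :
    ∀ᵐ x ∂μ,
      limsup (fun n : ℕ =>
          Real.log (∑ j ∈ Finset.range (cylMinReturn f P g n x + 1),
            Real.exp (∑ i ∈ Finset.range n, φ (f^[i] (f^[j] x)))) / n) atTop ≤
        limsup (fun n : ℕ =>
          Real.log (∫ y, Real.exp (∑ i ∈ Finset.range n, φ (f^[i] y)) ∂μ) / n)
          atTop := by
  obtain ⟨C, hC⟩ : ∃ C : ℝ, ∀ x, |φ x| ≤ C := by
    obtain ⟨C, hC⟩ := (isCompact_range hφ).isBounded.exists_norm_le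
    exact ⟨C, fun x => hC _ (Set.mem_range_self x)⟩
  set F : ℕ → X → ℝ := fun n y => Real.exp (∑ i ∈ Finset.range n, φ (f^[i] y)) with hFdef
  have hFc : ∀ n, Continuous (F n) := fun n =>
    Real.continuous_exp.comp (continuous_finsetSum _ fun i _ => hφ.comp (hf.iterate i))
  have hS : ∀ n y, |∑ i ∈ Finset.range n, φ (f^[i] y)| ≤ n * C := fun n y => by
    refine (Finset.abs_sum_le_sum_abs _ _).trans ?_
    refine (Finset.sum_le_sum fun i _ => hC _).trans ?_
    simp
  have hlo : ∀ (n : ℕ) y, Real.exp (-(n * C)) ≤ F n y := fun n y =>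
    Real.exp_le_exp.2 (abs_le.1 (hS n y)).1
  have hup : ∀ n y, F n y ≤ Real.exp (n * C) := fun n y =>
    Real.exp_le_exp.2 (abs_le.1 (hS n y)).2
  have hFpos : ∀ n y, 0 < F n y := fun n y => Real.exp_pos _
  have hint : ∀ n, Integrable (F n) μ := fun n =>
    Integrable.of_bound (hFc n).measurable.aestronglyMeasurable (Real.exp (n * C))
      (Eventually.of_forall fun y => by
        rw [Real.norm_eq_abs, abs_of_pos (hFpos n y)]; exact hup n y)
  have hIlo : ∀ n : ℕ, Real.exp (-(n * C)) ≤ ∫ y, F n y ∂μ := fun n => by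
    simpa using integral_mono (integrable_const (μ := μ) (Real.exp (-(n * C)))) (hint n) (hlo n)
  have hIup : ∀ n, ∫ y, F n y ∂μ ≤ Real.exp (n * C) := fun n => by
    simpa using integral_mono (hint n) (integrable_const (μ := μ) (Real.exp (n * C))) (hup n)
  have hIpos : ∀ n, 0 < ∫ y, F n y ∂μ := fun n => (Real.exp_pos _).trans_le (hIlo n)
  set w : ℕ → ℝ := fun n => Real.log (∫ y, F n y ∂μ) / n with hw
  set v : ℕ → ℝ := fun n : ℕ => 4 * Real.log ((n : ℝ) + 1) / n with hv
  have hv0 : Tendsto v atTop (nhds 0) := aux_log_tendsto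
  have hwup : ∀ᶠ n in atTop, w n ≤ C := by
    filter_upwards [eventually_ge_atTop 1] with n hn
    have hn' : (0 : ℝ) < n := by exact_mod_cast hn
    rw [hw]
    simp only
    rw [div_le_iff₀ hn', mul_comm]
    simpa using Real.log_le_log (hIpos n) (hIup n)
  have hwlo : ∀ᶠ n in atTop, -C ≤ w n := by
    filter_upwards [eventually_ge_atTop 1] with n hn
    have hn' : (0 : ℝ) < n := by exact_mod_cast hn
    rw [hw]
    simp only
    rw [le_div_iff₀ hn']
    have := Real.log_le_log (Real.exp_pos _) (hIlo n)
    rw [Real.log_exp] at this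
    linarith
  have hwv : limsup (w + v) atTop ≤ limsup w atTop := by
    have h := limsup_add_le (f := atTop) (u := w) (v := v)
      (isBoundedUnder_of_eventually_ge hwlo) (isBoundedUnder_of_eventually_le hwup)
      hv0.isBoundedUnder_ge.isCoboundedUnder_le hv0.isBoundedUnder_le
    rw [hv0.limsup_eq, add_zero] at h
    exact h
  have hwvb : IsBoundedUnder (· ≤ ·) atTop (w + v) := by
    refine isBoundedUnder_of_eventually_le (a := C + 1) ?_
    filter_upwards [hwup, hv0.eventually_le_const (show (0 : ℝ) < 1 by norm_num)] with n h1 h2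
    exact add_le_add h1 h2
  filter_upwards [hlin, aux_bound hμ.toMeasurePreserving F (fun n => (hFc n).measurable) hFpos hint]
    with x hx hb
  refine le_trans (limsup_le_limsup ?_ ?_ hwvb) hwv
  · filter_upwards [hb, hx.eventually_le_const (show (1 : ℝ) < 2 by norm_num),
      eventually_ge_atTop 1] with n h1 h2 hn
    have hn' : (0 : ℝ) < n := by exact_mod_cast hn
    rw [div_le_iff₀ hn'] at h2
    have h3 : cylMinReturn f P g n x ≤ 2 * n := by exact_mod_cast h2
    have h4 : ∑ j ∈ Finset.range (cylMinReturn f P g n x + 1), F n (f^[j] x) ≤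
        ((n : ℝ) + 1) ^ 4 * ∫ y, F n y ∂μ := by
      refine le_trans (Finset.sum_le_sum_of_subset_of_nonneg ?_ fun j _ _ => (hFpos n _).le) h1
      exact Finset.range_subset_range.2 (by omega)
    have h5 : 0 < ∑ j ∈ Finset.range (cylMinReturn f P g n x + 1), F n (f^[j] x) :=
      Finset.sum_pos (fun j _ => hFpos n _) (by simp)
    have h6 := Real.log_le_log h5 h4
    rw [Real.log_mul (by positivity) (hIpos n).ne', Real.log_pow] at h6
    simp only [Pi.add_apply, hw, hv]
    rw [← add_div]
    apply div_le_div_of_nonneg_right _ hn'.le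
    push_cast at h6
    linarith
  · refine IsBoundedUnder.isCoboundedUnder_le (isBoundedUnder_of_eventually_ge (a := -C) ?_)
    filter_upwards [eventually_ge_atTop 1] with n hn
    have hn' : (0 : ℝ) < n := by exact_mod_cast hn
    rw [le_div_iff₀ hn']
    have h4 : Real.exp (-(n * C)) ≤
        ∑ j ∈ Finset.range (cylMinReturn f P g n x + 1), F n (f^[j] x) := by
      refine (hlo n (f^[0] x)).trans ?_
      exact Finset.single_le_sum (f := fun j => F n (f^[j] x))
        (fun j _ => (hFpos n _).le) (by simp)
    have := Real.log_le_log (Real.exp_pos _) h4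
    rw [Real.log_exp] at this
    linarith
end

section
/- Let (X,f) be a topological dynamical system, g a mistake function, and φ: X → ℝ a continuous potential. For every δ > 0 there exists ε_δ > 0 such that for every 0 < ε < ε_δ, every x ∈ X and every n ≥ 1, Σ_{i=0}^{n−1}(φ(fⁱx) − δ) − C·g(n,ε) ≤ S_nφ(B_n(g;x,ε)) ≤ Σ_{i=0}^{n−1}(φ(fⁱx) + δ) + C·g(n,ε), where C = 2(‖φ‖_∞ + δ) and S_nφ(B_n(g;x,ε)) = sup{ Σ_{i=0}^{n−1} φ(fⁱy) : y ∈ B_n(g;x,ε) }. -/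
open Filter MeasureTheory Set Topology
open scoped ENNReal

/-- `S_nφ(B_n(g;x,ε)) = sup { Σ_{i<n} φ(fⁱy) : y ∈ B_n(g;x,ε) }`. -/
noncomputable def birkhoffSupOnMistakeBall {X : Type*} [PseudoMetricSpace X]
    (f : X → X) (φ : X → ℝ) (g : ℕ → ℝ → ℕ) (n : ℕ) (x : X) (ε : ℝ) : ℝ :=
  sSup ((fun y => ∑ i ∈ Finset.range n, φ (f^[i] y)) '' mistakeBall f g n x ε)

/-- **Continuity estimate for Birkhoff sums over mistake balls.** For every `δ > 0`
there exists `ε_δ > 0` such that for all `0 < ε < ε_δ`, all `x` and all `n ≥ 1`: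
`Σ_{i<n}(φ(fⁱx) − δ) − C g(n,ε) ≤ S_nφ(B_n(g;x,ε)) ≤ Σ_{i<n}(φ(fⁱx) + δ) + C g(n,ε)`,
where `C = 2(‖φ‖_∞ + δ)`. -/
theorem birkhoffSupOnMistakeBall_estimate {X : Type*} [MetricSpace X] [CompactSpace X]
    [Nonempty X] {f : X → X} (hf : Continuous f)
    {g : ℕ → ℝ → ℕ} (hg : IsMistakeFunction g)
    {φ : X → ℝ} (hφ : Continuous φ) {δ : ℝ} (hδ : 0 < δ) :
    ∃ εδ : ℝ, 0 < εδ ∧ ∀ ε : ℝ, 0 < ε → ε < εδ → ∀ x : X, ∀ n : ℕ, 1 ≤ n →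
      (∑ i ∈ Finset.range n, (φ (f^[i] x) - δ)) -
          2 * ((⨆ y : X, |φ y|) + δ) * g n ε ≤
        birkhoffSupOnMistakeBall f φ g n x ε ∧
      birkhoffSupOnMistakeBall f φ g n x ε ≤
        (∑ i ∈ Finset.range n, (φ (f^[i] x) + δ)) +
          2 * ((⨆ y : X, |φ y|) + δ) * g n ε := by
  have huc := CompactSpace.uniformContinuous_of_continuous hφ
  obtain ⟨η, hη, hηφ⟩ := Metric.uniformContinuous_iff.1 huc δ hδ
  have hbdd : BddAbove (Set.range fun y : X => |φ y|) :=
    (isCompact_range hφ.abs).bddAbove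
  set M : ℝ := ⨆ y : X, |φ y| with hM
  have hle : ∀ y, |φ y| ≤ M := fun y => le_ciSup hbdd y
  have hM0 : 0 ≤ M := (abs_nonneg _).trans (hle (Classical.arbitrary X))
  refine ⟨η, hη, fun ε hε hεη x n _ => ?_⟩
  have hC : (0 : ℝ) ≤ 2 * (M + δ) := by positivity
  have hg0 : (0 : ℝ) ≤ g n ε := Nat.cast_nonneg _
  have key : ∀ y ∈ mistakeBall f g n x ε, ∑ i ∈ Finset.range n, φ (f^[i] y) ≤
      (∑ i ∈ Finset.range n, (φ (f^[i] x) + δ)) + 2 * (M + δ) * g n ε := by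
    rintro y ⟨Λ, hΛ, hcard, hd⟩
    have h1 : ∑ i ∈ Λ, φ (f^[i] y) ≤ ∑ i ∈ Λ, (φ (f^[i] x) + δ) := by
      refine Finset.sum_le_sum fun i hi => ?_
      have h := hηφ ((hd i hi).trans hεη)
      rw [Real.dist_eq] at h
      linarith [(abs_lt.1 h).2]
    have h2 : ∑ i ∈ Finset.range n \ Λ, φ (f^[i] y) ≤
        ∑ i ∈ Finset.range n \ Λ, ((φ (f^[i] x) + δ) + 2 * (M + δ)) := by
      refine Finset.sum_le_sum fun i _ => ?_
      have a := (abs_le.1 (hle (f^[i] y))).2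
      have b := (abs_le.1 (hle (f^[i] x))).1
      linarith
    rw [Finset.sum_add_distrib, Finset.sum_const, nsmul_eq_mul] at h2
    have hc : (Finset.range n \ Λ).card ≤ g n ε := by
      rw [Finset.card_sdiff_of_subset hΛ, Finset.card_range]
      omega
    have hc' : ((Finset.range n \ Λ).card : ℝ) ≤ g n ε := by exact_mod_cast hc
    have h3 := mul_le_mul_of_nonneg_right hc' hC
    rw [← Finset.sum_sdiff hΛ, ← Finset.sum_sdiff (f := fun i => φ (f^[i] x) + δ) hΛ]
    linarith
  have hx : x ∈ mistakeBall f g n x ε :=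
    ⟨Finset.range n, subset_rfl, by simp, fun i _ => by simpa using hε⟩
  unfold birkhoffSupOnMistakeBall
  constructor
  · have h1 : ∑ i ∈ Finset.range n, (φ (f^[i] x) - δ) ≤ ∑ i ∈ Finset.range n, φ (f^[i] x) :=
      Finset.sum_le_sum fun i _ => by linarith
    have h2 : ∑ i ∈ Finset.range n, φ (f^[i] x) ≤
        sSup ((fun y => ∑ i ∈ Finset.range n, φ (f^[i] y)) '' mistakeBall f g n x ε) := by
      refine le_csSup ⟨(∑ i ∈ Finset.range n, (φ (f^[i] x) + δ)) + 2 * (M + δ) * g n ε, ?_⟩ ⟨x, hx, rfl⟩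
      · rintro _ ⟨y, hy, rfl⟩
        exact key y hy
    have h3 := mul_nonneg hC hg0
    linarith
  · refine csSup_le ⟨_, x, hx, rfl⟩ ?_
    rintro _ ⟨y, hy, rfl⟩
    exact key y hy
end
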